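/- For every i ∈ ℕ there exist a positive integer P_i and polynomials g_0, …, g_{P_i−1} with real coefficients, each of degree exactly 2i, with the following property: for every integer q with 2q ≥ i there exist a positive integer p divisible by P_i and polynomials f_0, …, f_{p−1} with rational coefficients such that o_P(q;n) = f_{n mod p}(n) for all integers n ≥ 0, and for every k ∈ {0, …, p−1} the coefficient of n^{2q−i} in f_k equals (vol B)^q · g_{k mod P_i}(q), where vol B is the Lebesgue area of B. (When vol B = 1 this says that the coefficient q!·γ_i of n^{2q−i} in each constituent of o_P(q;n) is a polynomial in q of degree 2i, varying periodically with n with a period independent of q.) -/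

import Mathlib

/-!
Let `N n` be the number of board points and `o q n` the number of labelled nonattacking
configurations. Put `c κ = ∑ j, κ.choose j * (-N) ^ (κ - j) * o j`, so that
`o q = ∑ κ, q.choose κ * N ^ (q - κ) * c κ`. By inclusion–exclusion `c κ` is, up to sign, the sum
over all `κ`-tuples of board points of the independence polynomial at `-1` of the attack graph. That
value vanishes if the graph has an isolated vertex, a graph without isolated vertices has at most
`κ / 2` components, and `O(n ^ (κ + s))` tuples have an attack graph with at most `s` components:
hence `c κ = O(n ^ (κ + κ / 2))`, and only `κ ≤ 2 * i` contributes to the coefficient of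
`n ^ (2 * q - i)`, which is therefore polynomial in `q`. For `κ = 2 * i` perfect matchings dominate;
all have the sign `(-1) ^ i` and there are of order `n ^ (3 * i)` of them, so `q.choose (2 * i)`
occurs with a nonzero coefficient and the degree is exactly `2 * i`.

That `o q` is a quasipolynomial for all `n ≥ 0`, and not only for large `n`, comes from counting
points cut out by homogeneous linear inequalities in the coordinates and the dilation factor: such
counts are quasipolynomial on each piece of a homogeneous subdivision, and the ray of positive
dilation factors lies in a single piece.
-/

open MeasureTheory Pointwise

namespace Nonattacking

open Polynomial Finset

/-! ### Quasipolynomials -/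

section Quasipolynomial

variable {R : Type*} [CommSemiring R] [Algebra R ℚ] {a b : R → ℚ} {m k : ℕ} {p r : R → ℚ[X]}

/-- The function `a` on `R` (in practice `ℕ` or `ℤ`) is a quasipolynomial of period `m`; the
constituents are indexed by all of `R`, `p s` being the one that belongs to the class of `s`. -/
structure HasConstituents (a : R → ℚ) (m : ℕ) (p : R → ℚ[X]) : Prop where
  pos : 0 < m
  periodic : Function.Periodic p (m : R)
  eval_eq : ∀ s, a s = (p s).eval (algebraMap R ℚ s)

namespace HasConstituents

lemma mul_period (h : HasConstituents a m p) (hk : 0 < k) : HasConstituents a (k * m) p where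
  pos := Nat.mul_pos hk h.pos
  periodic := by simpa using h.periodic.nat_mul k
  eval_eq := h.eval_eq

lemma of_dvd (h : HasConstituents a m p) (hk : 0 < k) (hmk : m ∣ k) : HasConstituents a k p := by
  obtain ⟨l, rfl⟩ := hmk
  exact mul_comm m l ▸ h.mul_period (Nat.pos_of_mul_pos_left hk)

lemma add (ha : HasConstituents a m p) (hb : HasConstituents b m r) :
    HasConstituents (a + b) m (p + r) where
  pos := ha.pos
  periodic := ha.periodic.add hb.periodic
  eval_eq s := by simp [ha.eval_eq, hb.eval_eq]

lemma mul (ha : HasConstituents a m p) (hb : HasConstituents b m r) :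
    HasConstituents (a * b) m (p * r) where
  pos := ha.pos
  periodic := ha.periodic.mul hb.periodic
  eval_eq s := by simp [ha.eval_eq, hb.eval_eq]

lemma const (c : ℚ) : HasConstituents (fun _ : R => c) 1 (fun _ => C c) where
  pos := one_pos
  periodic _ := rfl
  eval_eq _ := by simp

end HasConstituents

variable (R) in
/-- The algebra of quasipolynomials, of arbitrary period, on `R`. -/
def quasipolynomial : Subalgebra ℚ (R → ℚ) where
  carrier := {a | ∃ m p, HasConstituents a m p}
  mul_mem' := by
    rintro a b ⟨m, p, ha⟩ ⟨k, r, hb⟩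
    exact ⟨_, _, (ha.mul_period hb.pos).mul (mul_comm k m ▸ hb.mul_period ha.pos)⟩
  add_mem' := by
    rintro a b ⟨m, p, ha⟩ ⟨k, r, hb⟩
    exact ⟨_, _, (ha.mul_period hb.pos).add (mul_comm k m ▸ hb.mul_period ha.pos)⟩
  algebraMap_mem' c := ⟨_, _, HasConstituents.const c⟩

lemma algebraMap_mem_quasipolynomial : ⇑(algebraMap R ℚ) ∈ quasipolynomial R :=
  ⟨1, fun _ => X, one_pos, fun _ => rfl, fun _ => by simp⟩

lemma mem_quasipolynomial_of_periodic {φ : R → ℚ} (hm : 0 < m)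
    (hφ : Function.Periodic φ (m : R)) : φ ∈ quasipolynomial R :=
  ⟨m, fun s => C (φ s), hm, fun s => by simp [hφ s], fun s => by simp⟩

lemma quasipolynomial_comp_add (ha : a ∈ quasipolynomial R) (j : R) :
    (fun s => a (s + j)) ∈ quasipolynomial R := by
  obtain ⟨m, p, h⟩ := ha
  refine ⟨m, fun s => (p (s + j)).comp (X + C (algebraMap R ℚ j)), h.pos, fun s => ?_, fun s => ?_⟩
  · simp only [add_right_comm s (m : R) j, h.periodic (s + j)]
  · simp [h.eval_eq]

lemma quasipolynomial_natCast {a : ℤ → ℚ} (ha : a ∈ quasipolynomial ℤ) :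
    (fun n : ℕ => a n) ∈ quasipolynomial ℕ := by
  obtain ⟨m, p, h⟩ := ha
  refine ⟨m, fun n => p n, h.pos, fun n => ?_, fun n => by simp [h.eval_eq]⟩
  simpa using h.periodic n

/-- On monomials, `A` is a rescaled Bernoulli polynomial. -/
lemma exists_eval_add_sub_eval_eq {c : ℚ} (hc : c ≠ 0) (p : ℚ[X]) :
    ∃ A : ℚ[X], ∀ x, A.eval (x + c) - A.eval x = p.eval x := by
  induction p using Polynomial.induction_on' with
  | add p r hp hr =>
    obtain ⟨A, hA⟩ := hp
    obtain ⟨D, hD⟩ := hr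
    exact ⟨A + D, fun x => by simp only [eval_add]; linarith [hA x, hD x]⟩
  | monomial n a =>
    refine ⟨C (a * c ^ n / (n + 1)) * (Polynomial.bernoulli (n + 1)).comp (C c⁻¹ * X), fun x => ?_⟩
    have h := congrArg (eval (c⁻¹ * x)) (bernoulli_comp_one_add_X (n + 1))
    have hshift : c⁻¹ * (x + c) = 1 + c⁻¹ * x := by field_simp; ring
    simp only [eval_comp, eval_add, eval_mul, eval_C, eval_X, eval_one, eval_natCast, eval_monomial,
      eval_pow, Nat.add_sub_cancel, nsmul_eq_mul, hshift] at h ⊢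
    rw [h, mul_pow, inv_pow]
    push_cast
    field_simp
    ring

lemma sum_range_add_one_sub (f : ℤ → ℚ) (s : ℤ) (m : ℕ) :
    ∑ j ∈ range m, f (s + 1 + j) - ∑ j ∈ range m, f (s + j) = f (s + m) - f s := by
  have h := sum_range_sub (fun j : ℕ => f (s + j)) m
  simp only [Nat.cast_zero, add_zero, sum_sub_distrib] at h
  simpa [add_assoc, add_comm (1 : ℤ)] using h

lemma exists_antidifference {a : ℤ → ℚ} (ha : a ∈ quasipolynomial ℤ) :
    ∃ b ∈ quasipolynomial ℤ, ∀ s, b (s + 1) - b s = a s := by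
  obtain ⟨m, p, h⟩ := ha
  choose A hA using exists_eval_add_sub_eval_eq (c := m) (by exact_mod_cast h.pos.ne')
  let K : ℤ → ℚ := fun s => (A (p s)).eval (s : ℚ)
  have hK : K ∈ quasipolynomial ℤ :=
    ⟨m, fun s => A (p s), h.pos, fun s => by simp only [h.periodic s], fun s => rfl⟩
  refine ⟨∑ j ∈ range m, fun s => K (s + j),
    Subalgebra.sum_mem _ fun j _ => quasipolynomial_comp_add hK j, fun s => ?_⟩
  simp only [Finset.sum_apply, sum_range_add_one_sub]
  simpa [K, h.periodic s, h.eval_eq] using hA (p s) s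

end Quasipolynomial

/-! ### Homogeneous piecewise quasipolynomials -/

section Piecewise

open Classical in
/-- The Iverson bracket of a predicate. -/
noncomputable def iverson {α : Type*} (p : α → Prop) (x : α) : ℚ := if p x then 1 else 0

section Iverson

variable {α : Type*} {p r : α → Prop}

lemma iverson_not : iverson (fun x => ¬ p x) = 1 - iverson p := by
  ext x
  by_cases h : p x <;> simp [iverson, h]

lemma iverson_and : iverson (fun x => p x ∧ r x) = iverson p * iverson r := by
  ext x
  by_cases h : p x <;> by_cases h' : r x <;> simp [iverson, h, h']

end Iverson

variable {G G' : Type*} [AddCommGroup G] [AddCommGroup G']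

/-- Generators of the algebra of homogeneous piecewise quasipolynomials. The linear inequalities
have no constant term, so that their truth is constant along rays. -/
inductive IsPiecewiseGenerator : (G → ℚ) → Prop
  | linear (l : G →+ ℤ) : IsPiecewiseGenerator fun y => (l y : ℚ)
  | halfSpace (l : G →+ ℤ) : IsPiecewiseGenerator (iverson fun y => 0 < l y)
  | periodic (l : G →+ ℤ) {m : ℕ} (hm : 0 < m) {φ : ℤ → ℚ} (hφ : Function.Periodic φ (m : ℤ)) :
      IsPiecewiseGenerator fun y => φ (l y)

variable (G) in
/-- The algebra of homogeneous piecewise quasipolynomials on the abelian group `G`. -/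
def piecewiseQuasipolynomial : Subalgebra ℚ (G → ℚ) :=
  Algebra.adjoin ℚ {f | IsPiecewiseGenerator f}

/-- A predicate whose Iverson bracket is a homogeneous piecewise quasipolynomial. -/
def IsDefinable (p : G → Prop) : Prop := iverson p ∈ piecewiseQuasipolynomial G

lemma linear_mem_piecewise (l : G →+ ℤ) :
    (fun y => (l y : ℚ)) ∈ piecewiseQuasipolynomial G :=
  Algebra.subset_adjoin (.linear l)

lemma periodic_mem_piecewise (l : G →+ ℤ) {m : ℕ} (hm : 0 < m) {φ : ℤ → ℚ}
    (hφ : Function.Periodic φ (m : ℤ)) : (fun y => φ (l y)) ∈ piecewiseQuasipolynomial G :=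
  Algebra.subset_adjoin (.periodic l hm hφ)

lemma const_mem_piecewise (c : ℚ) : (fun _ => c) ∈ piecewiseQuasipolynomial G :=
  (piecewiseQuasipolynomial G).algebraMap_mem c

lemma piecewise_comp {f : G' → ℚ} (hf : f ∈ piecewiseQuasipolynomial G') (φ : G →+ G') :
    (fun y => f (φ y)) ∈ piecewiseQuasipolynomial G := by
  induction hf using Algebra.adjoin_induction with
  | mem f hf =>
    cases hf with
    | linear l => exact linear_mem_piecewise (l.comp φ)
    | halfSpace l => exact Algebra.subset_adjoin (.halfSpace (l.comp φ))
    | periodic l hm hψ => exact periodic_mem_piecewise (l.comp φ) hm hψ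
  | algebraMap c => exact const_mem_piecewise c
  | add f g _ _ hf hg => exact add_mem hf hg
  | mul f g _ _ hf hg => exact mul_mem hf hg

lemma eval_mem_piecewise (p : ℚ[X]) {f : G → ℚ} (hf : f ∈ piecewiseQuasipolynomial G) :
    (fun y => p.eval (f y)) ∈ piecewiseQuasipolynomial G := by
  induction p using Polynomial.induction_on' with
  | add p r hp hr =>
    simp only [eval_add]
    exact add_mem hp hr
  | monomial n c =>
    simp only [eval_monomial]
    exact mul_mem (const_mem_piecewise c) (pow_mem hf n)

namespace IsDefinable

variable {p r : G → Prop}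

lemma of_pos (l : G →+ ℤ) : IsDefinable fun y => 0 < l y :=
  Algebra.subset_adjoin (.halfSpace l)

lemma const (c : Prop) : IsDefinable fun _ : G => c := by
  classical
  exact const_mem_piecewise (if c then 1 else 0)

protected lemma not (hp : IsDefinable p) : IsDefinable fun y => ¬ p y := by
  unfold IsDefinable
  exact iverson_not ▸ sub_mem (one_mem _) hp

lemma and (hp : IsDefinable p) (hr : IsDefinable r) : IsDefinable fun y => p y ∧ r y := by
  unfold IsDefinable
  exact iverson_and ▸ mul_mem hp hr

lemma or (hp : IsDefinable p) (hr : IsDefinable r) : IsDefinable fun y => p y ∨ r y := by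
  simpa only [not_and_or, not_not] using (hp.not.and hr.not).not

lemma forall_mem {α : Type*} (s : Finset α) {p : α → G → Prop} (hp : ∀ a ∈ s, IsDefinable (p a)) :
    IsDefinable fun y => ∀ a ∈ s, p a y := by
  classical
  induction s using Finset.induction_on with
  | empty => simpa using const True
  | insert a s _ ih =>
    simp only [forall_mem_insert] at hp ⊢
    exact hp.1.and (ih hp.2)

lemma forall_finite {α : Type*} [Finite α] {p : α → G → Prop} (hp : ∀ a, IsDefinable (p a)) :
    IsDefinable fun y => ∀ a, p a y := by
  cases nonempty_fintype α
  simpa using forall_mem univ fun a _ => hp a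

lemma exists_mem {α : Type*} (s : Finset α) {p : α → G → Prop} (hp : ∀ a ∈ s, IsDefinable (p a)) :
    IsDefinable fun y => ∃ a ∈ s, p a y := by
  simpa using (forall_mem s fun a ha => (hp a ha).not).not

lemma of_lt (b c : G →+ ℤ) : IsDefinable fun y => b y < c y := by
  simpa using of_pos (c - b)

lemma of_le (b c : G →+ ℤ) : IsDefinable fun y => b y ≤ c y := by
  simpa using (of_lt c b).not

lemma of_eq (b c : G →+ ℤ) : IsDefinable fun y => b y = c y := by
  simpa only [le_antisymm_iff] using (of_le b c).and (of_le c b)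

lemma comp {p : G' → Prop} (hp : IsDefinable p) (φ : G →+ G') : IsDefinable fun y => p (φ y) :=
  piecewise_comp hp φ

end IsDefinable

lemma floor_mem_piecewise (l : G →+ ℤ) {c : ℤ} (hc : 0 < c) (e : ℤ) :
    (fun y => (((l y - e) / c : ℤ) : ℚ)) ∈ piecewiseQuasipolynomial G := by
  lift c to ℕ using hc.le
  have hmod := periodic_mem_piecewise l (φ := fun x => (((x - e) % c : ℤ) : ℚ))
    (by exact_mod_cast hc) fun x => by simp [add_sub_right_comm]
  have h := mul_mem (const_mem_piecewise (c : ℚ)⁻¹)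
    (sub_mem (sub_mem (linear_mem_piecewise l) (const_mem_piecewise (e : ℚ))) hmod)
  convert h using 1
  ext y
  have hc' : (c : ℚ) ≠ 0 := by exact_mod_cast hc.ne'
  have hdiv : (((l y - e) % c + c * ((l y - e) / c) : ℤ) : ℚ) = l y - e := by
    exact_mod_cast Int.emod_add_mul_ediv (l y - e) c
  push_cast at hdiv
  simp only [Pi.mul_apply, Pi.sub_apply, ← hdiv]
  field_simp
  ring

lemma periodic_emod {α : Type*} {φ : ℤ → α} {m : ℕ} (hφ : Function.Periodic φ (m : ℤ)) (s : ℤ) :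
    φ (s % m) = φ s := by
  rw [Int.emod_def, mul_comm]
  exact hφ.sub_int_mul_eq _

lemma sum_Ico_emod_eq {m : ℕ} (hm : 0 < m) (s : ℤ) (f : ℤ → ℚ) :
    ∑ ρ ∈ Ico 0 (m : ℤ), (if s % m = ρ then f ρ else 0) = f (s % m) := by
  rw [sum_ite_eq, if_pos]
  simp [Int.emod_nonneg s (Int.natCast_pos.2 hm).ne', Int.emod_lt_of_pos s (Int.natCast_pos.2 hm)]

lemma quasipolynomial_floor_mem_piecewise {a : ℤ → ℚ} (ha : a ∈ quasipolynomial ℤ) (l : G →+ ℤ)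
    {c : ℤ} (hc : 0 < c) (e : ℤ) :
    (fun y => a ((l y - e) / c)) ∈ piecewiseQuasipolynomial G := by
  obtain ⟨m, p, h⟩ := ha
  lift c to ℕ using hc.le
  have hresidue (ρ : ℤ) : Function.Periodic
      (fun x => if (x - e) / c % m = ρ then (1 : ℚ) else 0) ((c * m : ℕ) : ℤ) := fun x => by
    have hdiv : (x + (c * m : ℕ) - e) / c = (x - e) / c + m := by
      rw [← Int.add_mul_ediv_left _ _ hc.ne', Nat.cast_mul, add_sub_right_comm]
    simp only [hdiv, Int.add_emod_right]
  have hsum := sum_mem fun ρ (_ : ρ ∈ Ico 0 (m : ℤ)) => mul_mem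
    (periodic_mem_piecewise l (Nat.mul_pos (by exact_mod_cast hc) h.pos) (hresidue ρ))
    (eval_mem_piecewise (p ρ) (floor_mem_piecewise l hc e))
  convert hsum using 1
  ext y
  have hp : p ((l y - e) / c % m) = p ((l y - e) / c) := periodic_emod h.periodic _
  simp only [Finset.sum_apply, Pi.mul_apply, ite_mul, one_mul, zero_mul,
    sum_Ico_emod_eq h.pos _ fun ρ => (p ρ).eval _, hp, h.eval_eq]
  simp

/-- Lower bounds for the last coordinate `s` of `(y, s) : G × ℤ` by a linear form in `y`. The
number `e ∈ {0, 1}` distinguishes `b y < c * s` from `b y ≤ c * s`. -/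
inductive IsThreshold : (G × ℤ → Prop) → Prop
  | top : IsThreshold fun _ => True
  | lt_mul (b : G →+ ℤ) {c e : ℤ} (hc : 0 < c) (he₀ : 0 ≤ e) (he₁ : e ≤ 1) :
      IsThreshold fun z => b z.1 - e < c * z.2

variable (G) in
/-- Linear span of the products of a piecewise quasipolynomial in `y`, a threshold, and a
quasipolynomial in `s`: a normal form for functions of `(y, s)` that are to be summed over `s`. -/
def thresholdSpan : Submodule ℚ (G × ℤ → ℚ) :=
  Submodule.span ℚ {F | ∃ h ∈ piecewiseQuasipolynomial G, ∃ T, IsThreshold T ∧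
    ∃ a ∈ quasipolynomial ℤ, F = fun z => h z.1 * iverson T z * a z.2}

lemma mem_thresholdSpan {h : G → ℚ} (hh : h ∈ piecewiseQuasipolynomial G) {T : G × ℤ → Prop}
    (hT : IsThreshold T) {a : ℤ → ℚ} (ha : a ∈ quasipolynomial ℤ) :
    (fun z => h z.1 * iverson T z * a z.2) ∈ thresholdSpan G :=
  Submodule.subset_span ⟨h, hh, T, hT, a, ha, rfl⟩

lemma mul_mem_thresholdSpan {h : G → ℚ} (hh : h ∈ piecewiseQuasipolynomial G) {a : ℤ → ℚ}
    (ha : a ∈ quasipolynomial ℤ) : (fun z => h z.1 * a z.2) ∈ thresholdSpan G := by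
  simpa [iverson] using mem_thresholdSpan hh .top ha

lemma fst_mem_thresholdSpan {h : G → ℚ} (hh : h ∈ piecewiseQuasipolynomial G) :
    (fun z => h z.1) ∈ thresholdSpan G := by
  simpa using mul_mem_thresholdSpan hh (one_mem (quasipolynomial ℤ))

lemma threshold_imp {b c e b' c' e' s : ℤ} (hc : 0 < c) (hc' : 0 < c') (he : e ≤ 1)
    (he' : 0 ≤ e') (hle : c * b' < c' * b ∨ c * b' = c' * b ∧ e ≤ e')
    (hs : b - e < c * s) : b' - e' < c' * s := by
  by_contra! hs'
  have hmul : c' * (b - e + 1) ≤ c' * (c * s) := by gcongr; lia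
  have hmul' : c * (c' * s) ≤ c * (b' - e') := by gcongr
  rw [mul_left_comm] at hmul
  rcases hle with hlt | ⟨heq, hee⟩ <;> nlinarith

lemma IsThreshold.exists_comparison {S T : G × ℤ → Prop} (hS : IsThreshold S)
    (hT : IsThreshold T) :
    ∃ p : G → Prop, IsDefinable p ∧ ∀ z, (p z.1 → S z → T z) ∧ (¬ p z.1 → T z → S z) := by
  cases hS with
  | top => exact ⟨_, .const False, by simp⟩
  | @lt_mul b c e hc he₀ he₁ =>
    cases hT with
    | top => exact ⟨_, .const True, by simp⟩
    | @lt_mul b' c' e' hc' he₀' he₁' =>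
      refine ⟨fun y => (c • b') y < (c' • b) y ∨ (c • b') y = (c' • b) y ∧ e ≤ e',
        (IsDefinable.of_lt _ _).or ((IsDefinable.of_eq _ _).and (.const _)), fun z => ⟨?_, ?_⟩⟩
      · exact threshold_imp hc hc' he₁ he₀'
      · intro hp
        refine threshold_imp hc' hc he₁' he₀ ?_
        simp only [AddMonoidHom.coe_smul, Pi.smul_apply, smul_eq_mul] at hp
        lia

lemma IsThreshold.exists_iverson_mul {S T : G × ℤ → Prop} (hS : IsThreshold S)
    (hT : IsThreshold T) : ∃ h ∈ piecewiseQuasipolynomial G,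
      ∀ z, iverson S z * iverson T z = h z.1 * iverson S z + (1 - h z.1) * iverson T z := by
  obtain ⟨p, hp, h⟩ := hS.exists_comparison hT
  refine ⟨iverson p, hp, fun z => ?_⟩
  have := h z
  by_cases hpz : p z.1 <;> by_cases hSz : S z <;> by_cases hTz : T z <;> simp_all [iverson]

lemma thresholdSpan_mul_mem {F F' : G × ℤ → ℚ} (hF : F ∈ thresholdSpan G)
    (hF' : F' ∈ thresholdSpan G) : F * F' ∈ thresholdSpan G := by
  suffices thresholdSpan G * thresholdSpan G ≤ thresholdSpan G from
    this (Submodule.mul_mem_mul hF hF')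
  conv_lhs => unfold thresholdSpan
  rw [Submodule.span_mul_span, Submodule.span_le]
  rintro _ ⟨_, ⟨h, hh, S, hS, a, ha, rfl⟩, _, ⟨h', hh', T, hT, a', ha', rfl⟩, rfl⟩
  obtain ⟨k, hk, hkST⟩ := hS.exists_iverson_mul hT
  convert! add_mem (mem_thresholdSpan (mul_mem (mul_mem hh hh') hk) hS (mul_mem ha ha'))
    (mem_thresholdSpan (mul_mem (mul_mem hh hh') (sub_mem (one_mem _) hk)) hT (mul_mem ha ha'))
    using 1
  ext z
  simp only [Pi.mul_apply, Pi.add_apply, Pi.sub_apply, Pi.one_apply]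
  linear_combination h z.1 * h' z.1 * a z.2 * a' z.2 * hkST z

lemma exists_apply_prod_int (l : G × ℤ →+ ℤ) :
    ∃ (b : G →+ ℤ) (c : ℤ), ∀ z, l z = b z.1 + c * z.2 := by
  refine ⟨l.comp (.inl G ℤ), l (0, 1), fun ⟨y, s⟩ => ?_⟩
  have hdecomp : (y, s) = (y, 0) + s • ((0 : G), (1 : ℤ)) := by simp
  rw [hdecomp, map_add, map_zsmul]
  simp [mul_comm]

lemma linear_mem_thresholdSpan (l : G × ℤ →+ ℤ) : (fun z => (l z : ℚ)) ∈ thresholdSpan G := by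
  obtain ⟨b, c, hl⟩ := exists_apply_prod_int l
  convert! add_mem (fst_mem_thresholdSpan (linear_mem_piecewise b))
    (mul_mem_thresholdSpan (const_mem_piecewise (c : ℚ)) algebraMap_mem_quasipolynomial)
  simp [hl]

lemma halfSpace_mem_thresholdSpan (l : G × ℤ →+ ℤ) :
    (iverson fun z => 0 < l z) ∈ thresholdSpan G := by
  obtain ⟨b, c, hl⟩ := exists_apply_prod_int l
  have hthreshold {T : G × ℤ → Prop} (hT : IsThreshold T) : iverson T ∈ thresholdSpan G := by
    simpa using mem_thresholdSpan (one_mem _) hT (one_mem _)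
  rcases lt_trichotomy c 0 with hc | rfl | hc
  · have hT := hthreshold (.lt_mul b (neg_pos.2 hc) zero_le_one le_rfl)
    convert! sub_mem (fst_mem_thresholdSpan (one_mem (piecewiseQuasipolynomial G))) hT using 1
    simp only [Pi.one_apply]
    rw [← Pi.one_def, ← iverson_not]
    congr! 2 with z
    rw [hl]
    lia
  · simp only [hl, zero_mul, add_zero]
    exact fst_mem_thresholdSpan (IsDefinable.of_pos b)
  · have hT := hthreshold (.lt_mul (-b) hc le_rfl zero_le_one)
    convert! hT using 3 with z
    rw [hl, AddMonoidHom.neg_apply]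
    lia

lemma periodic_mem_thresholdSpan (l : G × ℤ →+ ℤ) {m : ℕ} (hm : 0 < m) {φ : ℤ → ℚ}
    (hφ : Function.Periodic φ (m : ℤ)) : (fun z => φ (l z)) ∈ thresholdSpan G := by
  obtain ⟨b, c, hl⟩ := exists_apply_prod_int l
  have hsum := sum_mem fun ρ (_ : ρ ∈ Ico 0 (m : ℤ)) => mul_mem_thresholdSpan
    (periodic_mem_piecewise b hm (φ := fun x => φ (x + c * ρ)) fun x => by
      simp only [add_right_comm x _ (c * ρ), hφ _])
    (mem_quasipolynomial_of_periodic (φ := fun s : ℤ => if s % m = ρ then (1 : ℚ) else 0) hm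
      fun s => by simp)
  convert hsum using 1
  ext z
  simp only [Finset.sum_apply, mul_ite, mul_one, mul_zero,
    sum_Ico_emod_eq hm z.2 fun ρ => φ (b z.1 + c * ρ), hl]
  rw [Int.emod_def, ← hφ.sub_int_mul_eq (c * (z.2 / m)), Int.cast_id]
  ring_nf

lemma mem_thresholdSpan_of_mem_piecewise {F : G × ℤ → ℚ}
    (hF : F ∈ piecewiseQuasipolynomial (G × ℤ)) : F ∈ thresholdSpan G := by
  induction hF using Algebra.adjoin_induction with
  | mem F hF =>
    cases hF with
    | linear l => exact linear_mem_thresholdSpan l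
    | halfSpace l => exact halfSpace_mem_thresholdSpan l
    | periodic l hm hφ => exact periodic_mem_thresholdSpan l hm hφ
  | algebraMap c => exact fst_mem_thresholdSpan (const_mem_piecewise c)
  | add F F' _ _ hF hF' => exact add_mem hF hF'
  | mul F F' _ _ hF hF' => exact thresholdSpan_mul_mem hF hF'

lemma quasipolynomial_comp_mem_piecewise {a : ℤ → ℚ} (ha : a ∈ quasipolynomial ℤ) (l : G →+ ℤ) :
    (fun y => a (l y)) ∈ piecewiseQuasipolynomial G := by
  simpa using quasipolynomial_floor_mem_piecewise ha l one_pos 0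

lemma quasipolynomial_floor_antidifference (a : ℤ → ℚ) {b c e : ℤ} (hc : 0 < c) (s : ℤ) :
    (if b - e < c * (s + 1) then a (s + 1) - a ((b - e) / c + 1) else 0) -
      (if b - e < c * s then a s - a ((b - e) / c + 1) else 0) =
      if b - e < c * s then a (s + 1) - a s else 0 := by
  simp only [← Int.ediv_lt_iff_lt_mul hc, mul_comm c]
  rcases lt_trichotomy ((b - e) / c) s with h | h | h
  · simp [h, h.trans (lt_add_one s)]
  · simp [h]
  · simp [h.not_gt, (Int.add_one_le_iff.2 h).not_gt]

lemma IsThreshold.isDefinable {T : G × ℤ → Prop} (hT : IsThreshold T) : IsDefinable T := by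
  cases hT with
  | top => exact .const True
  | @lt_mul b c e hc he₀ he₁ =>
    obtain rfl | rfl : e = 0 ∨ e = 1 := by lia
    · simpa using IsDefinable.of_lt (b.comp (.fst G ℤ)) (c • .snd G ℤ)
    · simpa [Int.sub_one_lt_iff] using IsDefinable.of_le (b.comp (.fst G ℤ)) (c • .snd G ℤ)

lemma exists_antidifference_threshold {T : G × ℤ → Prop} (hT : IsThreshold T) {a : ℤ → ℚ}
    (ha : a ∈ quasipolynomial ℤ) : ∃ F ∈ piecewiseQuasipolynomial (G × ℤ),
      ∀ y s, F (y, s + 1) - F (y, s) = iverson T (y, s) * a s := by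
  obtain ⟨A, hA, hAa⟩ := exists_antidifference ha
  have hsnd : (fun z : G × ℤ => A z.2) ∈ piecewiseQuasipolynomial (G × ℤ) :=
    quasipolynomial_comp_mem_piecewise hA (.snd G ℤ)
  have hTdef := hT.isDefinable
  cases hT with
  | top => exact ⟨_, hsnd, fun y s => by simp [iverson, hAa]⟩
  | @lt_mul b c e hc he₀ he₁ =>
    have hfloor := quasipolynomial_floor_mem_piecewise (quasipolynomial_comp_add hA 1)
      (b.comp (.fst G ℤ)) hc e
    refine ⟨_, mul_mem hTdef (sub_mem hsnd hfloor), fun y s => ?_⟩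
    simpa [iverson, hAa] using quasipolynomial_floor_antidifference A (b := b y) (e := e) hc s

lemma thresholdSpan.exists_antidifference {F : G × ℤ → ℚ} (hF : F ∈ thresholdSpan G) :
    ∃ H ∈ piecewiseQuasipolynomial (G × ℤ), ∀ y s, H (y, s + 1) - H (y, s) = F (y, s) := by
  induction hF using Submodule.span_induction with
  | mem F hF =>
    obtain ⟨h, hh, T, hT, a, ha, rfl⟩ := hF
    obtain ⟨H, hH, hHT⟩ := exists_antidifference_threshold hT ha
    refine ⟨_, mul_mem (piecewise_comp hh (.fst G ℤ)) hH, fun y s => ?_⟩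
    simp [← mul_sub, hHT, mul_assoc]
  | zero => exact ⟨0, zero_mem _, by simp⟩
  | add F F' _ _ hF hF' =>
    obtain ⟨H, hH, h⟩ := hF
    obtain ⟨H', hH', h'⟩ := hF'
    exact ⟨_, add_mem hH hH', fun y s => by simp [← h, ← h', add_sub_add_comm]⟩
  | smul c F _ hF =>
    obtain ⟨H, hH, h⟩ := hF
    exact ⟨_, Subalgebra.smul_mem _ hH c, fun y s => by simp [← h, mul_sub]⟩

lemma sum_Ico_add_one_sub (H : ℤ → ℚ) {a b : ℤ} (hab : a ≤ b) :
    ∑ s ∈ Ico a b, (H (s + 1) - H s) = H b - H a := by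
  induction b, hab using Int.leInduction with
  | base => simp
  | succ n hn ih =>
    rw [← insert_Ico_right_eq_Ico_add_one hn, sum_insert (by simp), ih]
    ring

theorem sum_Ico_mem_piecewise {F : G × ℤ → ℚ} (hF : F ∈ piecewiseQuasipolynomial (G × ℤ))
    (α β : G →+ ℤ) :
    (fun y => ∑ s ∈ Ico (α y) (β y), F (y, s)) ∈ piecewiseQuasipolynomial G := by
  obtain ⟨H, hH, hHF⟩ := thresholdSpan.exists_antidifference (mem_thresholdSpan_of_mem_piecewise hF)
  have hgraph (γ : G →+ ℤ) : (fun y => H (y, γ y)) ∈ piecewiseQuasipolynomial G :=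
    piecewise_comp hH ((AddMonoidHom.id G).prod γ)
  convert! mul_mem (IsDefinable.of_le α β) (sub_mem (hgraph β) (hgraph α)) using 1
  ext y
  simp only [← hHF, Pi.mul_apply, Pi.sub_apply]
  by_cases hαβ : α y ≤ β y
  · simp [iverson, hαβ, sum_Ico_add_one_sub (fun s => H (y, s)) hαβ]
  · simp [iverson, hαβ, Ico_eq_empty (mt le_of_lt hαβ)]

/-- The `q`-tuples of lattice points of the square `[α, β)²`. -/
noncomputable def tuplesInSquare (q : ℕ) (α β : ℤ) : Finset (Fin q → ℤ × ℤ) :=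
  Fintype.piFinset fun _ => Ico α β ×ˢ Ico α β

lemma sum_tuplesInSquare_succ (q : ℕ) (α β : ℤ) (F : (Fin (q + 1) → ℤ × ℤ) → ℚ) :
    ∑ z ∈ tuplesInSquare (q + 1) α β, F z = ∑ a ∈ Ico α β, ∑ b ∈ Ico α β,
      ∑ z ∈ tuplesInSquare q α β, F (Fin.cons (a, b) z) := by
  simp only [← sum_product']
  refine sum_equiv ((Fin.consEquiv fun _ => ℤ × ℤ).symm.trans (.prodAssoc ..))
    (fun z => ?_) fun z _ => ?_
  · simp [tuplesInSquare, Fin.forall_fin_succ, Fin.tail, and_assoc]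
  · simp [Fin.consEquiv]

theorem sum_tuplesInSquare_mem_piecewise (q : ℕ) {F : G × (Fin q → ℤ × ℤ) → ℚ}
    (hF : F ∈ piecewiseQuasipolynomial (G × (Fin q → ℤ × ℤ))) (α β : G →+ ℤ) :
    (fun y => ∑ z ∈ tuplesInSquare q (α y) (β y), F (y, z)) ∈ piecewiseQuasipolynomial G := by
  induction q generalizing G with
  | zero =>
    convert! piecewise_comp hF (.inl G _) with y
    simp [tuplesInSquare, Subsingleton.elim default ![]]
  | succ q ih =>
    let cons : ((G × ℤ) × ℤ) × (Fin q → ℤ × ℤ) →+ G × (Fin (q + 1) → ℤ × ℤ) :=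
      { toFun w := (w.1.1.1, Fin.consLinearEquiv ℤ (fun _ => ℤ × ℤ) ((w.1.1.2, w.1.2), w.2))
        map_zero' := by simp
        map_add' v w := by simp [← map_add] }
    let fst₁ : G × ℤ →+ G := .fst G ℤ
    let fst₂ : (G × ℤ) × ℤ →+ G := fst₁.comp (.fst (G × ℤ) ℤ)
    simp only [sum_tuplesInSquare_succ]
    exact sum_Ico_mem_piecewise (sum_Ico_mem_piecewise
      (ih (piecewise_comp hF cons) (α.comp fst₂) (β.comp fst₂)) (α.comp fst₁) (β.comp fst₁)) α β

theorem exists_quasipolynomial_eq_of_pos {f : ℤ → ℚ} (hf : f ∈ piecewiseQuasipolynomial ℤ) :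
    ∃ a ∈ quasipolynomial ℤ, ∀ t, 0 < t → f t = a t := by
  induction hf using Algebra.adjoin_induction with
  | mem f hf =>
    have hmul (l : ℤ →+ ℤ) (t : ℤ) : l t = t * l 1 := by simpa using map_zsmul l t 1
    cases hf with
    | linear l =>
      refine ⟨_, mul_mem algebraMap_mem_quasipolynomial
        (Subalgebra.algebraMap_mem _ (l 1 : ℚ)), fun t _ => ?_⟩
      simp [hmul l t]
    | halfSpace l =>
      refine ⟨_, Subalgebra.algebraMap_mem _ (iverson (fun y => 0 < l y) 1), fun t ht => ?_⟩
      simp [iverson, hmul l t, ht]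
    | @periodic l m hm φ hφ =>
      refine ⟨_, mem_quasipolynomial_of_periodic hm fun t => ?_, fun t _ => rfl⟩
      rw [map_add, hmul l m, mul_comm]
      simpa using hφ.int_mul (l 1) (l t)
  | algebraMap c => exact ⟨_, Subalgebra.algebraMap_mem _ c, fun _ _ => rfl⟩
  | add f f' _ _ hf hf' =>
    obtain ⟨a, ha, hfa⟩ := hf
    obtain ⟨a', ha', hfa'⟩ := hf'
    exact ⟨_, add_mem ha ha', fun t ht => by simp [hfa t ht, hfa' t ht]⟩
  | mul f f' _ _ hf hf' =>
    obtain ⟨a, ha, hfa⟩ := hf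
    obtain ⟨a', ha', hfa'⟩ := hf'
    exact ⟨_, mul_mem ha ha', fun t ht => by simp [hfa t ht, hfa' t ht]⟩

open Classical in
theorem IsDefinable.card_filter_mem_quasipolynomial {q : ℕ} {p : ℤ × (Fin q → ℤ × ℤ) → Prop}
    (hp : IsDefinable p) (K : ℤ) :
    (fun n : ℕ => (#{z ∈ tuplesInSquare q (-K * (n + 1)) (K * (n + 1)) | p (n + 1, z)} : ℚ)) ∈
      quasipolynomial ℕ := by
  obtain ⟨a, ha, hcount⟩ := exists_quasipolynomial_eq_of_pos
    (sum_tuplesInSquare_mem_piecewise q hp (.mulLeft (-K)) (.mulLeft K))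
  convert quasipolynomial_natCast (quasipolynomial_comp_add ha 1) using 2 with n
  rw [← hcount _ (by positivity)]
  simp [iverson]

end Piecewise

/-! ### Definability of the board -/

section Board

/-- The determinant of two plane vectors. -/
def det {R : Type*} [CommRing R] (u v : R × R) : R := u.1 * v.2 - u.2 * v.1

/-- A lattice point as a point of the real plane. -/
def toReal (z : ℤ × ℤ) : ℝ × ℝ := (z.1, z.2)

lemma re_mul_im_sub_im_mul_re_nonneg_of_arg_le {z w : ℂ} (hz : 0 ≤ z.im) (h : z.arg ≤ w.arg) :
    0 ≤ z.re * w.im - z.im * w.re := by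
  have hsin : 0 ≤ Real.sin (w.arg - z.arg) := by
    refine Real.sin_nonneg_of_nonneg_of_le_pi (sub_nonneg.2 h) ?_
    linarith [w.arg_le_pi, Complex.arg_nonneg_iff.2 hz]
  calc 0 ≤ ‖z‖ * ‖w‖ * Real.sin (w.arg - z.arg) := by positivity
    _ = (‖z‖ * Real.cos z.arg) * (‖w‖ * Real.sin w.arg)
        - (‖z‖ * Real.sin z.arg) * (‖w‖ * Real.cos w.arg) := by rw [Real.sin_sub]; ring
    _ = z.re * w.im - z.im * w.re := by
      simp only [Complex.norm_mul_cos_arg, Complex.norm_mul_sin_arg]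

lemma exists_det_nonneg_of_linear_le {V : Finset (ℝ × ℝ)} {x : ℝ × ℝ} (hV : ∃ v ∈ V, v ≠ x)
    {f : ℝ × ℝ →ₗ[ℝ] ℝ} (hf : f ≠ 0) (hfV : ∀ v ∈ V, f v ≤ f x) :
    ∃ w ∈ V, w ≠ x ∧ ∀ v ∈ V, 0 ≤ det (w - x) (v - x) := by
  classical
  set α := f (1, 0)
  set β := f (0, 1)
  have hf_apply (u : ℝ × ℝ) : f u = α * u.1 + β * u.2 := by
    have hu : u = u.1 • ((1 : ℝ), (0 : ℝ)) + u.2 • ((0 : ℝ), (1 : ℝ)) := by ext <;> simp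
    conv_lhs => rw [hu, map_add, map_smul, map_smul]
    simp only [smul_eq_mul, α, β]
    ring
  have hpos : 0 < α ^ 2 + β ^ 2 := by
    have : α ≠ 0 ∨ β ≠ 0 := by
      by_contra! h
      exact hf (LinearMap.ext fun u => by simp [hf_apply, h])
    rcases this with h | h <;> positivity
  -- A rotation and dilation moving the half-plane `f ≤ f x` to the upper half-plane.
  let ζ (v : ℝ × ℝ) : ℂ := ⟨α * (v - x).2 - β * (v - x).1, -f (v - x)⟩
  obtain ⟨w, hw, hmin⟩ := ({v ∈ V | v ≠ x}).exists_min_image (fun v => (ζ v).arg)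
    (by simpa [Finset.Nonempty] using hV)
  rw [mem_filter] at hw
  refine ⟨w, hw.1, hw.2, fun v hv => ?_⟩
  by_cases hvx : v = x
  · simp [hvx, det]
  have harg := re_mul_im_sub_im_mul_re_nonneg_of_arg_le (z := ζ w) (w := ζ v)
    (by simpa [ζ] using hfV w hw.1) (hmin v (by simp [hv, hvx]))
  have hdet : (ζ w).re * (ζ v).im - (ζ w).im * (ζ v).re
      = (α ^ 2 + β ^ 2) * det (w - x) (v - x) := by
    simp only [ζ, hf_apply, det]
    ring
  exact nonneg_of_mul_nonneg_right (hdet ▸ harg) hpos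

lemma notMem_interior_of_det_nonneg {B : Set (ℝ × ℝ)} {w x : ℝ × ℝ} (hwx : w ≠ x)
    (hB : ∀ b ∈ B, 0 ≤ det (w - x) (b - x)) : x ∉ interior B := by
  intro hx
  have hcont : Continuous fun δ : ℝ => x + δ • ((w - x).2, -(w - x).1) := by fun_prop
  have hlim : Filter.Tendsto (fun δ : ℝ => x + δ • ((w - x).2, -(w - x).1)) (nhds 0) (nhds x) := by
    simpa using hcont.tendsto 0
  obtain ⟨δ, hδ, hδB⟩ := (hlim.eventually (mem_interior_iff_mem_nhds.1 hx)).exists_gt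
  have hdet : det (w - x) (x + δ • ((w - x).2, -(w - x).1) - x)
      = -(δ * ((w - x).1 ^ 2 + (w - x).2 ^ 2)) := by
    simp only [det, add_sub_cancel_left, Prod.smul_fst, Prod.smul_snd, smul_eq_mul]
    ring
  have hnorm : 0 < (w - x).1 ^ 2 + (w - x).2 ^ 2 := by
    have : (w - x).1 ≠ 0 ∨ (w - x).2 ≠ 0 := by
      by_contra! h
      exact hwx (sub_eq_zero.1 (Prod.ext h.1 h.2))
    rcases this with h | h <;> positivity
  have := hB _ hδB
  rw [hdet] at this
  linarith [mul_pos hδ hnorm]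

lemma convex_setOf_det_nonneg (u x : ℝ × ℝ) : Convex ℝ {b : ℝ × ℝ | 0 ≤ det u (b - x)} := by
  intro a ha b hb s t hs ht hst
  have hdet : det u (s • a + t • b - x) = s * det u (a - x) + t * det u (b - x) := by
    simp only [det, Prod.fst_sub, Prod.snd_sub, Prod.fst_add, Prod.snd_add, Prod.smul_fst,
      Prod.smul_snd, smul_eq_mul]
    linear_combination (u.1 * x.2 - u.2 * x.1) * hst
  rw [Set.mem_ofPred_eq, hdet]
  exact add_nonneg (mul_nonneg hs ha) (mul_nonneg ht hb)

lemma notMem_interior_convexHull_iff {V : Finset (ℝ × ℝ)}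
    (hV : (interior (convexHull ℝ (V : Set (ℝ × ℝ)))).Nonempty) {x : ℝ × ℝ} :
    x ∉ interior (convexHull ℝ (V : Set (ℝ × ℝ))) ↔
      ∃ w ∈ V, w ≠ x ∧ ∀ v ∈ V, 0 ≤ det (w - x) (v - x) := by
  have hconv : Convex ℝ (convexHull ℝ (V : Set (ℝ × ℝ))) := convex_convexHull ℝ _
  refine ⟨fun hx => ?_, fun ⟨w, _, hwx, hw⟩ => notMem_interior_of_det_nonneg hwx fun b hb =>
    convexHull_min (s := (V : Set (ℝ × ℝ))) hw (convex_setOf_det_nonneg _ _) hb⟩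
  obtain ⟨f, hf⟩ := geometric_hahn_banach_open_point hconv.interior isOpen_interior hx
  have hfV : ∀ v ∈ V, f v ≤ f x := by
    intro v hv
    have hcl : v ∈ closure (interior (convexHull ℝ (V : Set (ℝ × ℝ)))) := by
      rw [hconv.closure_interior_eq_closure_of_nonempty_interior hV]
      exact subset_closure (subset_convexHull ℝ _ hv)
    exact closure_minimal (fun a ha => (hf a ha).le)
      (isClosed_le f.continuous continuous_const) hcl
  obtain ⟨a, ha⟩ := hV
  refine exists_det_nonneg_of_linear_le (f := f) ?_ (fun h => ?_) hfV
  · by_contra! h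
    have hsub : convexHull ℝ (V : Set (ℝ × ℝ)) ⊆ {x} := convexHull_min h (convex_singleton x)
    simpa using interior_mono hsub ha
  · have h0 (u : ℝ × ℝ) : f u = 0 := congrArg (fun g : ℝ × ℝ →ₗ[ℝ] ℝ => g u) h
    simpa [h0] using hf a ha

lemma exists_smul_eq_toReal {V : Finset (ℝ × ℝ)}
    (hV : ∀ v ∈ V, ∃ a b : ℚ, v = ((a : ℝ), (b : ℝ))) :
    ∃ D : ℤ, 0 < D ∧ ∀ v ∈ V, ∃ w : ℤ × ℤ, (D : ℝ) • v = toReal w := by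
  classical
  choose! a b hab using hV
  obtain ⟨D, hD⟩ := IsLocalization.exist_integer_multiples_of_finset (nonZeroDivisors ℤ)
    (V.image a ∪ V.image b)
  have hD0 : (D : ℤ) ≠ 0 := nonZeroDivisors.coe_ne_zero D
  have hint (c : ℚ) (hc : c ∈ V.image a ∪ V.image b) :
      ∃ k : ℤ, ((D : ℤ) : ℝ) ^ 2 * (c : ℝ) = k := by
    obtain ⟨k, hk⟩ := hD c hc
    refine ⟨D * k, ?_⟩
    have hk' : (k : ℚ) = (D : ℤ) * c := by simpa using hk
    have : (k : ℝ) = ((D : ℤ) : ℝ) * c := by exact_mod_cast hk'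
    push_cast
    rw [this]
    ring
  refine ⟨(D : ℤ) ^ 2, by positivity, fun v hv => ?_⟩
  obtain ⟨k, hk⟩ := hint (a v) (mem_union_left _ (mem_image_of_mem a hv))
  obtain ⟨l, hl⟩ := hint (b v) (mem_union_right _ (mem_image_of_mem b hv))
  refine ⟨(k, l), ?_⟩
  rw [hab v hv]
  ext <;> simp [toReal, hk, hl]

/-- The linear form `det u`. -/
def detHom (u : ℤ × ℤ) : ℤ × ℤ →+ ℤ where
  toFun := det u
  map_zero' := by simp [det]
  map_add' x y := by simp [det]; ring

/-- The map `(t, z) ↦ D z - t w`, which compares the dilated points `t w / D` and `z`. -/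
def offsetHom (D : ℤ) (w : ℤ × ℤ) : ℤ × (ℤ × ℤ) →+ ℤ × ℤ where
  toFun y := D • y.2 - y.1 • w
  map_zero' := by simp
  map_add' x y := by simp only [Prod.fst_add, Prod.snd_add, smul_add, add_smul]; abel

lemma toReal_offsetHom {D : ℤ} {w : ℤ × ℤ} {v : ℝ × ℝ} (hv : (D : ℝ) • v = toReal w) {t : ℤ}
    (ht : t ≠ 0) (z : ℤ × ℤ) :
    toReal (offsetHom D w (t, z)) = -((D * t : ℝ) • (v - (t : ℝ)⁻¹ • toReal z)) := by
  have ht' : (t : ℝ) ≠ 0 := by exact_mod_cast ht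
  have h1 := congrArg Prod.fst hv
  have h2 := congrArg Prod.snd hv
  simp only [toReal, Prod.smul_fst, Prod.smul_snd, smul_eq_mul] at h1 h2
  ext <;> simp [offsetHom, toReal, ← h1, ← h2] <;> field_simp <;> ring

lemma exists_isDefinable_mem_smul_interior {V : Finset (ℝ × ℝ)}
    (hV : ∀ v ∈ V, ∃ a b : ℚ, v = ((a : ℝ), (b : ℝ)))
    (hint : (interior (convexHull ℝ (V : Set (ℝ × ℝ)))).Nonempty) :
    ∃ S : ℤ × (ℤ × ℤ) → Prop, IsDefinable S ∧ ∀ t : ℤ, 0 < t → ∀ z,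
      (S (t, z) ↔ toReal z ∈ (t : ℝ) • interior (convexHull ℝ (V : Set (ℝ × ℝ)))) := by
  obtain ⟨D, hD, hDV⟩ := exists_smul_eq_toReal hV
  choose! w hw using hDV
  refine ⟨fun y => ¬ ∃ u ∈ V, ¬ ((offsetHom D (w u) y).1 = 0 ∧ (offsetHom D (w u) y).2 = 0) ∧
    ∀ v ∈ V, 0 ≤ detHom (w v - w u) (offsetHom D (w u) y), ?_, fun t ht z => ?_⟩
  · refine (IsDefinable.exists_mem V fun u _ => .and (.not (.and ?_ ?_))
      (.forall_mem V fun v _ => ?_)).not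
    · exact .of_eq ((AddMonoidHom.fst ℤ ℤ).comp (offsetHom D (w u))) 0
    · exact .of_eq ((AddMonoidHom.snd ℤ ℤ).comp (offsetHom D (w u))) 0
    · exact .of_le 0 ((detHom (w v - w u)).comp (offsetHom D (w u)))
  have htR : (0 : ℝ) < t := by exact_mod_cast ht
  rw [Set.mem_smul_set_iff_inv_smul_mem₀ htR.ne', ← not_iff_not, not_not,
    notMem_interior_convexHull_iff hint]
  refine exists_congr fun u => and_congr_right fun hu => ?_
  have hoff := toReal_offsetHom (hw u hu) ht.ne' z
  refine and_congr (not_congr ?_) (forall₂_congr fun v hv => ?_)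
  · have : toReal (offsetHom D (w u) (t, z)) = 0 ↔ u = (t : ℝ)⁻¹ • toReal z := by
      rw [hoff, neg_eq_zero, smul_eq_zero_iff_right (by positivity), sub_eq_zero]
    simpa [toReal, Prod.ext_iff] using this
  · have hdet : ((detHom (w v - w u) (offsetHom D (w u) (t, z)) : ℤ) : ℝ)
        = D ^ 2 * t * det (u - (t : ℝ)⁻¹ • toReal z) (v - (t : ℝ)⁻¹ • toReal z) := by
      have : ((detHom (w v - w u) (offsetHom D (w u) (t, z)) : ℤ) : ℝ)
          = det (toReal (w v) - toReal (w u)) (toReal (offsetHom D (w u) (t, z))) := by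
        simp [detHom, det, toReal]
      rw [this, hoff, ← hw u hu, ← hw v hv]
      simp only [det, Prod.fst_sub, Prod.snd_sub, Prod.fst_neg, Prod.snd_neg, Prod.smul_fst,
        Prod.smul_snd, smul_eq_mul]
      ring
    rw [← @Int.cast_nonneg_iff ℝ, hdet]
    exact mul_nonneg_iff_of_pos_left (by positivity)

end Board

/-! ### Alternating sums over independent sets -/

section IndepSum

variable {ι : Type*} {G : SimpleGraph ι}

open Classical in
/-- The independence polynomial of the subgraph of `G` induced on `U`, evaluated at `-1`. -/
noncomputable def indepSum (G : SimpleGraph ι) (U : Finset ι) : ℤ :=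
  ∑ S ∈ U.powerset with G.IsIndepSet (SetLike.coe S), (-1) ^ #S

lemma indepSum_empty : indepSum G ∅ = 1 := by
  simp [indepSum, Finset.sum_filter]

lemma abs_indepSum_le (G : SimpleGraph ι) (U : Finset ι) : |indepSum G U| ≤ 2 ^ #U := by
  classical
  calc |indepSum G U| ≤ ∑ S ∈ U.powerset with G.IsIndepSet (SetLike.coe S), |(-1 : ℤ) ^ #S| :=
      abs_sum_le_sum_abs _ _
    _ ≤ ∑ S ∈ U.powerset, |(-1 : ℤ) ^ #S| :=
      sum_le_sum_of_subset_of_nonneg (filter_subset _ _) fun _ _ _ => abs_nonneg _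
    _ = 2 ^ #U := by simp

lemma isIndepSet_insert_iff {v : ι} {S : Set ι} (hv : v ∉ S) :
    G.IsIndepSet (insert v S) ↔ G.IsIndepSet S ∧ ∀ u ∈ S, ¬ G.Adj v u := by
  have : Std.Symm fun v w => ¬ G.Adj v w := ⟨fun _ _ h h' => h h'.symm⟩
  rw [SimpleGraph.isIndepSet_iff, Set.pairwise_insert_of_symm_of_notMem hv]

open Classical in
lemma indepSum_insert {v : ι} {U : Finset ι} (hv : v ∉ U) :
    indepSum G (insert v U) = indepSum G U - indepSum G {u ∈ U | ¬ G.Adj v u} := by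
  simp only [indepSum, Finset.sum_filter]
  rw [sum_powerset_insert hv, sub_eq_add_neg, ← sum_neg_distrib]
  congr 1
  rw [← sum_subset (powerset_mono.2 (filter_subset (fun u => ¬ G.Adj v u) U))]
  · refine sum_congr rfl fun S hS => ?_
    have hSU (u : ι) (hu : u ∈ S) := mem_filter.1 (mem_powerset.1 hS hu)
    have hvS : v ∉ S := fun h => hv (hSU v h).1
    have hiff : G.IsIndepSet (SetLike.coe (insert v S)) ↔ G.IsIndepSet (S : Set ι) := by
      rw [coe_insert, isIndepSet_insert_iff (mem_coe.not.2 hvS)]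
      exact and_iff_left fun u hu => (hSU u (mem_coe.1 hu)).2
    simp only [hiff, card_insert_of_notMem hvS, pow_succ, mul_neg_one, apply_ite Neg.neg, neg_zero]
  · intro S hS hS'
    have hvS : v ∉ S := fun h => hv (mem_powerset.1 hS h)
    refine if_neg fun h => hS' (mem_powerset.2 fun u hu => mem_filter.2 ⟨mem_powerset.1 hS hu, ?_⟩)
    rw [coe_insert, isIndepSet_insert_iff (mem_coe.not.2 hvS)] at h
    exact h.2 u hu

lemma indepSum_eq_zero_of_isolated {v : ι} {U : Finset ι} (hvU : v ∈ U)
    (hv : ∀ u ∈ U, ¬ G.Adj v u) : indepSum G U = 0 := by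
  classical
  rw [← insert_erase hvU, indepSum_insert (notMem_erase v U),
    filter_true_of_mem fun u hu => hv u (mem_of_mem_erase hu), sub_self]

open Classical in
lemma indepSum_eq_neg_of_forall_adj_eq {u v : ι} {U : Finset ι} (hu : u ∈ U) (hv : v ∈ U)
    (hvu : v ≠ u) (hadj : ∀ w ∈ U, G.Adj v w → w = u) :
    indepSum G U = -indepSum G {w ∈ U.erase u | ¬ G.Adj u w} := by
  have hisolated : indepSum G (U.erase u) = 0 :=
    indepSum_eq_zero_of_isolated (mem_erase.2 ⟨hvu, hv⟩) fun w hw h =>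
      ne_of_mem_erase hw (hadj w (mem_of_mem_erase hw) h)
  rw [← insert_erase hu, indepSum_insert (notMem_erase u U), hisolated, zero_sub,
    erase_insert (notMem_erase u U)]

lemma exists_indepSum_eq_of_existsUnique_adj (hG : ∀ v, ∃! u, G.Adj v u) (U : Finset ι)
    (hU : ∀ v ∈ U, ∀ u, G.Adj v u → u ∈ U) : ∃ i, #U = 2 * i ∧ indepSum G U = (-1) ^ i := by
  classical
  induction U using Finset.strongInduction with
  | H U ih =>
    obtain rfl | ⟨v, hv⟩ := U.eq_empty_or_nonempty
    · exact ⟨0, by simp, by simp [indepSum_empty]⟩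
    obtain ⟨u, huv, hvu⟩ := hG v
    have huU := hU v hv u huv
    have hadj (w : ι) : G.Adj u w ↔ w = v :=
      ⟨fun h => (hG u).unique h huv.symm, fun h => h ▸ huv.symm⟩
    have hU' : ({w ∈ U.erase u | ¬ G.Adj u w} : Finset ι) = (U.erase u).erase v := by
      simp only [hadj, ← ne_eq, filter_ne']
    have hv' : v ∈ U.erase u := mem_erase.2 ⟨huv.ne, hv⟩
    obtain ⟨i, hi, hsum⟩ := ih ((U.erase u).erase v)
      ((erase_ssubset hv').trans (erase_ssubset huU)) fun w hw y hwy => by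
        simp only [mem_erase] at hw ⊢
        refine ⟨?_, ?_, hU w hw.2.2 y hwy⟩
        · rintro rfl
          exact hw.2.1 (hvu w hwy.symm)
        · rintro rfl
          exact hw.1 ((hadj w).1 hwy.symm)
    refine ⟨i + 1, ?_, ?_⟩
    · rw [← card_erase_add_one huU, ← card_erase_add_one hv', hi]
      ring
    · rw [indepSum_eq_neg_of_forall_adj_eq huU hv huv.ne fun w _ => hvu w, hU', hsum, pow_succ,
        mul_neg_one]

lemma indepSum_univ_eq_of_existsUnique_adj [Fintype ι] (hG : ∀ v, ∃! u, G.Adj v u) {i : ℕ}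
    (hi : Fintype.card ι = 2 * i) : indepSum G univ = (-1) ^ i := by
  obtain ⟨j, hj, hsum⟩ := exists_indepSum_eq_of_existsUnique_adj hG univ fun _ _ _ _ => mem_univ _
  rw [hsum, show j = i by rw [card_univ] at hj; lia]

end IndepSum

/-! ### Components and rooted spanning forests -/

section Components

variable {ι : Type*} {G : SimpleGraph ι}

lemma exists_adj_dist_lt {a b : ι} (h : G.Reachable a b) (hab : a ≠ b) :
    ∃ u, G.Adj a u ∧ G.dist u b < G.dist a b := by
  obtain ⟨w, hw⟩ := h.exists_walk_length_eq_dist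
  cases w with
  | nil => exact absurd rfl hab
  | cons hau w' =>
    refine ⟨_, hau, ?_⟩
    rw [← hw, SimpleGraph.Walk.length_cons]
    exact Nat.lt_succ_of_le (SimpleGraph.dist_le w')

variable (G) in
/-- A spanning forest with one root per component, given by a parent map `p` and a depth `d`. -/
lemma exists_spanning_forest [Finite ι] : ∃ (R : Finset ι) (p : ι → ι) (d : ι → ℕ),
    #R ≤ Nat.card G.ConnectedComponent ∧ ∀ v ∉ R, d (p v) < d v ∧ G.Adj v (p v) := by
  classical
  cases nonempty_fintype ι
  let root (v : ι) : ι := (G.connectedComponentMk v).out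
  have hparent (v : ι) (hv : root v ≠ v) :
      ∃ u, G.Adj v u ∧ G.dist u (root u) < G.dist v (root v) := by
    have hreach : G.Reachable v (root v) :=
      SimpleGraph.ConnectedComponent.exact (Quot.out_eq (G.connectedComponentMk v)).symm
    obtain ⟨u, hu, hlt⟩ := exists_adj_dist_lt hreach hv.symm
    have : root u = root v := by
      simp only [root, SimpleGraph.ConnectedComponent.sound hu.reachable]
    exact ⟨u, hu, this ▸ hlt⟩
  choose! p hp using hparent
  refine ⟨univ.image fun c : G.ConnectedComponent => c.out, p, fun v => G.dist v (root v), ?_,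
    fun v hv => (hp v fun h => hv ?_).symm⟩
  · exact card_image_le.trans_eq (by rw [card_univ, Nat.card_eq_fintype_card])
  · exact mem_image.2 ⟨G.connectedComponentMk v, mem_univ _, h⟩

variable [Fintype ι]

open Classical in
lemma card_le_card_component {v : ι} {s : Finset ι} (hs : ∀ u ∈ s, G.Reachable u v) :
    #s ≤ #{u | G.connectedComponentMk u = G.connectedComponentMk v} :=
  card_le_card fun u hu =>
    mem_filter.2 ⟨mem_univ u, SimpleGraph.ConnectedComponent.sound (hs u hu)⟩

open Classical in
lemma two_le_card_component (hG : ∀ v, ∃ u, G.Adj v u) (c : G.ConnectedComponent) :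
    2 ≤ #{u | G.connectedComponentMk u = c} := by
  obtain ⟨v, rfl⟩ := c.exists_rep
  obtain ⟨u, hu⟩ := hG v
  rw [← card_pair hu.ne]
  exact card_le_card_component (by simp [hu.symm.reachable])

open Classical in
lemma card_eq_sum_card_component :
    Fintype.card ι = ∑ c : G.ConnectedComponent, #{u | G.connectedComponentMk u = c} :=
  card_eq_sum_card_fiberwise fun _ _ => mem_univ _

lemma two_mul_card_component_le (hG : ∀ v, ∃ u, G.Adj v u) :
    2 * Nat.card G.ConnectedComponent ≤ Fintype.card ι := by
  classical
  rw [card_eq_sum_card_component (G := G), Nat.card_eq_fintype_card, mul_comm, ← smul_eq_mul]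
  exact card_nsmul_le_sum univ _ 2 fun c _ => two_le_card_component hG c

lemma existsUnique_adj_of_card_le (hG : ∀ v, ∃ u, G.Adj v u)
    (hcard : Fintype.card ι ≤ 2 * Nat.card G.ConnectedComponent) (v : ι) : ∃! u, G.Adj v u := by
  classical
  obtain ⟨u, hu⟩ := hG v
  refine ⟨u, hu, fun w hw => ?_⟩
  by_contra hwu
  have hthree : 2 < #{x | G.connectedComponentMk x = G.connectedComponentMk v} := by
    have : #{v, u, w} = 3 := card_eq_three.2 ⟨v, u, w, hu.ne, hw.ne, Ne.symm hwu, rfl⟩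
    refine lt_of_lt_of_le (by lia) (card_le_card_component (s := {v, u, w}) ?_)
    simp [hu.symm.reachable, hw.symm.reachable]
  have hsum := sum_lt_sum (s := univ) (fun c _ => two_le_card_component hG c)
    ⟨_, mem_univ _, hthree⟩
  rw [← card_eq_sum_card_component, sum_const, smul_eq_mul, card_univ,
    ← Nat.card_eq_fintype_card] at hsum
  lia

open Classical in
lemma sub_le_neg_one_pow_mul_indepSum {i : ℕ} (hi : Fintype.card ι = 2 * i) :
    (if ∀ v, ∃ u, G.Adj v u then 1 else 0) -
        (2 ^ (2 * i) + 1) * (if Nat.card G.ConnectedComponent < i then 1 else 0) ≤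
      (-1) ^ i * indepSum G univ := by
  by_cases hG : ∀ v, ∃ u, G.Adj v u
  · rw [if_pos hG]
    split_ifs with hcard
    · have := abs_indepSum_le G univ
      rw [card_univ, hi, ← one_mul |_|, ← abs_neg_one_pow i, ← abs_mul] at this
      linarith [neg_le_of_abs_le this]
    · rw [indepSum_univ_eq_of_existsUnique_adj (existsUnique_adj_of_card_le hG (by lia)) hi,
        ← mul_pow]
      simp
  · rw [if_neg hG]
    push Not at hG
    obtain ⟨v, hv⟩ := hG
    rw [indepSum_eq_zero_of_isolated (mem_univ v) fun u _ => hv u, mul_zero, zero_sub,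
      neg_nonpos]
    positivity

end Components

/-! ### Inclusion–exclusion over nonattacking configurations -/

section BinomialTransform

variable {R : Type*} [CommRing R]

/-- The binomial transform of the sequence `o` with parameter `N`: umbrally, `(o - N) ^ k`. -/
def binomialTransform (N : R) (o : ℕ → R) (k : ℕ) : R :=
  ∑ j ∈ range (k + 1), k.choose j * ((-N) ^ (k - j) * o j)

lemma binomialTransform_map_pow {A : Type*} [CommRing A] [Algebra R A] (L : A →ₗ[R] R) (N : R)
    (x : A) (k : ℕ) :
    binomialTransform N (fun j => L (x ^ j)) k = L ((x - algebraMap R A N) ^ k) := by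
  rw [sub_eq_add_neg, add_pow, map_sum]
  refine sum_congr rfl fun j _ => ?_
  rw [← smul_eq_mul ((-N) ^ (k - j)), ← map_smul, ← nsmul_eq_mul, ← map_nsmul, nsmul_eq_mul,
    Algebra.smul_def, map_pow, map_neg]
  congr 1
  ring

lemma binomialTransform_neg_binomialTransform (N : R) (o : ℕ → R) (k : ℕ) :
    binomialTransform (-N) (binomialTransform N o) k = o k := by
  let L : R[X] →ₗ[R] R := Polynomial.lsum fun j => LinearMap.toSpanSingleton R R (o j)
  have hL : o = fun j => L (X ^ j) := by
    funext j
    rw [Polynomial.lsum_apply, X_pow_eq_monomial, sum_monomial_index _ _ (by simp)]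
    simp
  have hT : binomialTransform N o = fun j => L ((X - algebraMap R R[X] N) ^ j) := by
    funext j
    rw [hL, binomialTransform_map_pow]
  rw [hT, binomialTransform_map_pow, map_neg, sub_neg_eq_add, sub_add_cancel, hL]

end BinomialTransform

section Configurations

variable {X ι κ : Type*} {r : X → X → Prop}

/-- The graph on the labels of a configuration `z` that joins the labels of attacking points. -/
def attackGraph (r : X → X → Prop) (z : ι → X) : SimpleGraph ι :=
  .fromRel fun i j => r (z i) (z j)

lemma attackGraph_adj [Std.Symm r] {z : ι → X} {i j : ι} :
    (attackGraph r z).Adj i j ↔ i ≠ j ∧ r (z i) (z j) := by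
  rw [attackGraph, SimpleGraph.fromRel_adj, or_iff_left_of_imp fun h => symm_of r h]

variable [Fintype ι] [Fintype κ] (E : Finset X)

open Classical in
/-- The configurations of pairwise nonattacking points of `E`, labelled by `ι`. -/
noncomputable def nonattacking (r : X → X → Prop) (E : Finset X) (ι : Type*) [Fintype ι] :
    Finset (ι → X) :=
  {z ∈ Fintype.piFinset fun _ => E | Pairwise fun i j => ¬ r (z i) (z j)}

lemma mem_nonattacking {E : Finset X} {z : ι → X} :
    z ∈ nonattacking r E ι ↔ (∀ i, z i ∈ E) ∧ Pairwise fun i j => ¬ r (z i) (z j) := by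
  simp only [nonattacking, mem_filter, Fintype.mem_piFinset]

lemma card_nonattacking_congr (e : ι ≃ κ) :
    #(nonattacking r E ι) = #(nonattacking r E κ) := by
  refine card_equiv (e.arrowCongr (Equiv.refl X)) fun z => ?_
  simp only [mem_nonattacking, Pairwise, e.forall_congr_left, Equiv.arrowCongr_apply,
    Function.comp_apply, Equiv.refl_apply, ne_eq, EmbeddingLike.apply_eq_iff_eq]

open Classical in
lemma card_filter_isIndepSet_attackGraph [DecidableEq ι] [Std.Symm r] (S : Finset ι) :
    #{z ∈ Fintype.piFinset fun _ : ι => E | (attackGraph r z).IsIndepSet (SetLike.coe S)} =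
      #E ^ (Fintype.card ι - #S) * #(nonattacking r E (Fin #S)) := by
  have hfree : #(Fintype.piFinset fun _ : {i // i ∉ S} => E) = #E ^ (Fintype.card ι - #S) := by
    simp [Fintype.card_subtype_compl]
  rw [← hfree, ← card_nonattacking_congr E S.equivFin, mul_comm, ← card_product]
  refine card_equiv (Equiv.piEquivPiSubtypeProd (· ∈ S) fun _ => X) fun z => ?_
  simp only [mem_filter, mem_product, Fintype.mem_piFinset, mem_nonattacking,
    SimpleGraph.isIndepSet_iff, Set.Pairwise, mem_coe, attackGraph_adj, not_and, Pairwise,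
    Subtype.forall, ne_eq, Subtype.mk.injEq, Equiv.piEquivPiSubtypeProd_apply]
  constructor
  · rintro ⟨h, h'⟩
    exact ⟨⟨fun i _ => h i, fun i hi j hj hij => h' hi hj hij hij⟩, fun i _ => h i⟩
  · rintro ⟨⟨h, h'⟩, h''⟩
    exact ⟨fun i => if hi : i ∈ S then h i hi else h'' i hi,
      fun i hi j hj hij _ => h' i hi j hj hij⟩

/-- The signed count of configurations of `k` points that is left after subtracting, through the
binomial transform, the contribution of the points that interact with no other point. -/
noncomputable def attackCumulant (r : X → X → Prop) (E : Finset X) : ℕ → ℤ :=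
  binomialTransform (#E : ℤ) fun j => #(nonattacking r E (Fin j))

lemma sum_choose_mul_attackCumulant (q : ℕ) :
    ∑ k ∈ range (q + 1), (q.choose k : ℤ) * (#E ^ (q - k) * attackCumulant r E k) =
      #(nonattacking r E (Fin q)) := by
  rw [← binomialTransform_neg_binomialTransform (#E : ℤ) (fun j => #(nonattacking r E (Fin j))) q]
  simp only [binomialTransform, attackCumulant, neg_neg]

lemma attackCumulant_card [DecidableEq ι] [Std.Symm r] :
    attackCumulant r E (Fintype.card ι) =
      (-1) ^ Fintype.card ι *
        ∑ z ∈ Fintype.piFinset fun _ : ι => E, indepSum (attackGraph r z) univ := by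
  let f (j : ℕ) : ℤ := (-1) ^ j * (#E ^ (Fintype.card ι - j) * #(nonattacking r E (Fin j)))
  have hsum : ∑ z ∈ Fintype.piFinset fun _ : ι => E, indepSum (attackGraph r z) univ =
      ∑ S ∈ (univ : Finset ι).powerset, f #S := by
    classical
    unfold indepSum
    rw [sum_comm' (t' := univ.powerset) (s' := fun S => {z ∈ Fintype.piFinset fun _ : ι => E |
      (attackGraph r z).IsIndepSet (SetLike.coe S)}) fun z S => by
        simp only [mem_filter]; tauto]
    refine sum_congr rfl fun S _ => ?_
    rw [sum_const, card_filter_isIndepSet_attackGraph, nsmul_eq_mul, mul_comm]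
    push_cast
    rfl
  rw [hsum, sum_powerset_apply_card, card_univ, mul_sum, attackCumulant, binomialTransform]
  refine sum_congr rfl fun j hj => ?_
  have hsign : (-1 : ℤ) ^ (Fintype.card ι - j) = (-1) ^ Fintype.card ι * (-1) ^ j := by
    rw [← pow_add, show Fintype.card ι + j = Fintype.card ι - j + 2 * j by
      have := mem_range.1 hj; lia, pow_add, pow_mul]
    simp
  rw [neg_pow, hsign, nsmul_eq_mul]
  ring

end Configurations

/-! ### Counting configurations by the components of the attack graph -/

section Counting

variable {X ι : Type*} {r : X → X → Prop} {E : Finset X} {A t : ℕ}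

lemma exists_injOn_lt {α : Type*} {s : Finset α} {D : ℕ} (hs : #s ≤ D) :
    ∃ c : α → ℕ, Set.InjOn c s ∧ ∀ x ∈ s, c x < D := by
  obtain ⟨c, hc, hinj⟩ := s.finite_toSet.exists_injOn_of_encard_le (t := (range D : Set ℕ)) (by
    simpa only [Set.encard_coe_eq_coe_finsetCard, card_range, Nat.cast_le] using hs)
  exact ⟨c, hinj, fun x hx => mem_range.1 (hc hx)⟩

variable [Fintype ι] [DecidableEq ι]

lemma card_piFinset_ite {Y : Type*} (R : Finset ι) (s t : Finset Y) :
    #(Fintype.piFinset fun v => if v ∈ R then s else t) = #s ^ #R * #t ^ (Fintype.card ι - #R) := by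
  simp only [Fintype.card_piFinset, apply_ite Finset.card, prod_ite, prod_const, ← card_compl,
    filter_mem_eq_inter, univ_inter, filter_notMem_eq_sdiff, compl_eq_univ_sdiff]

/-- Encode a configuration by the points at the roots and, at every other vertex `v`, the rank of
the point among those attacked from the parent `p v`. -/
lemma card_filter_forest_le [DecidableRel r] {D : ℕ} (hD : ∀ w ∈ E, #{z ∈ E | r w z} ≤ D)
    {R : Finset ι} {p : ι → ι} {d : ι → ℕ} (hd : ∀ v ∉ R, d (p v) < d v) :
    #{z ∈ Fintype.piFinset fun _ : ι => E | ∀ v ∉ R, r (z (p v)) (z v)} ≤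
      #E ^ #R * D ^ (Fintype.card ι - #R) := by
  have hcode (w : X) (hw : w ∈ E) := exists_injOn_lt (hD w hw)
  choose! c hc using hcode
  let codes : Finset (ι → X ⊕ ℕ) := Fintype.piFinset fun v =>
    if v ∈ R then E.map .inl else (range D).map .inr
  have hcodes : #codes = #E ^ #R * D ^ (Fintype.card ι - #R) := by
    rw [card_piFinset_ite, card_map, card_map, card_range]
  have hmem {z : ι → X} (hz : z ∈ ({z ∈ Fintype.piFinset fun _ : ι => E |
      ∀ v ∉ R, r (z (p v)) (z v)} : Finset (ι → X))) (v : ι) (hv : v ∉ R) :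
      z (p v) ∈ E ∧ z v ∈ ({x ∈ E | r (z (p v)) x} : Finset X) := by
    rw [mem_filter, Fintype.mem_piFinset] at hz
    exact ⟨hz.1 _, mem_filter.2 ⟨hz.1 _, hz.2 v hv⟩⟩
  rw [← hcodes]
  refine card_le_card_of_injOn
    (fun z v => if v ∈ R then .inl (z v) else .inr (c (z (p v)) (z v))) (fun z hz => ?_) ?_
  · refine mem_coe.2 (Fintype.mem_piFinset.2 fun v => ?_)
    by_cases hv : v ∈ R
    · simpa [hv] using Fintype.mem_piFinset.1 (mem_filter.1 hz).1 v
    · have := hmem hz v hv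
      simpa [hv] using (hc _ this.1).2 _ this.2
  · intro z hz z' hz' h
    suffices ∀ k v, d v = k → z v = z' v from funext fun v => this _ v rfl
    intro k
    induction k using Nat.strong_induction_on with
    | _ k ih =>
      rintro v rfl
      have hv := congrFun h v
      by_cases hvR : v ∈ R
      · simpa [hvR] using hv
      · have hp := ih _ (hd v hvR) (p v) rfl
        have hcv := hmem hz v hvR
        have hcv' := hmem hz' v hvR
        rw [← hp] at hcv'
        simp only [hvR, if_false, Sum.inr.injEq, ← hp] at hv
        exact (hc _ hcv.1).1 hcv.2 hcv'.2 hv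

open Classical in
/-- `E` has the growth of the points of a planar region of diameter `t`, with `r` relating points
on common lines: at most `A * t ^ 2` points, each attacking at most `A * t` points. -/
structure AttackBound (r : X → X → Prop) (E : Finset X) (A t : ℕ) : Prop where
  one_le : 1 ≤ t
  card_le : #E ≤ A * t ^ 2
  degree_le : ∀ w ∈ E, #{z ∈ E | r w z} ≤ A * t

lemma AttackBound.card_filter_card_component_le [Std.Symm r] (h : AttackBound r E A t) (s : ℕ)
    [DecidablePred fun z : ι → X => Nat.card (attackGraph r z).ConnectedComponent ≤ s] :
    #{z ∈ Fintype.piFinset fun _ : ι => E |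
        Nat.card (attackGraph r z).ConnectedComponent ≤ s} ≤
      (2 * Fintype.card ι * A) ^ Fintype.card ι * t ^ (Fintype.card ι + s) := by
  classical
  let forests : Finset (Finset ι × (ι → ι)) :=
    {x | #x.1 ≤ s ∧ ∃ d : ι → ℕ, ∀ v ∉ x.1, d (x.2 v) < d v}
  have hcover : {z ∈ Fintype.piFinset fun _ : ι => E |
      Nat.card (attackGraph r z).ConnectedComponent ≤ s} ⊆ forests.biUnion fun x =>
        {z ∈ Fintype.piFinset fun _ : ι => E | ∀ v ∉ x.1, r (z (x.2 v)) (z v)} := by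
    intro z hz
    obtain ⟨R, p, d, hR, hp⟩ := exists_spanning_forest (attackGraph r z)
    refine mem_biUnion.2 ⟨(R, p), mem_filter.2 ⟨mem_univ _, hR.trans (mem_filter.1 hz).2, d,
      fun v hv => (hp v hv).1⟩, mem_filter.2 ⟨(mem_filter.1 hz).1, fun v hv => ?_⟩⟩
    exact symm_of r (attackGraph_adj.1 (hp v hv).2).2
  have hforest : ∀ x ∈ forests,
      #{z ∈ Fintype.piFinset fun _ : ι => E | ∀ v ∉ x.1, r (z (x.2 v)) (z v)} ≤
        A ^ Fintype.card ι * t ^ (Fintype.card ι + s) := by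
    intro x hx
    obtain ⟨hs, d, hd⟩ := (mem_filter.1 hx).2
    have hx := card_le_univ x.1
    calc _ ≤ #E ^ #x.1 * (A * t) ^ (Fintype.card ι - #x.1) :=
          card_filter_forest_le h.degree_le hd
      _ ≤ (A * t ^ 2) ^ #x.1 * (A * t) ^ (Fintype.card ι - #x.1) := by gcongr; exact h.card_le
      _ = A ^ (#x.1 + (Fintype.card ι - #x.1)) * t ^ (2 * #x.1 + (Fintype.card ι - #x.1)) := by
          ring
      _ ≤ A ^ Fintype.card ι * t ^ (Fintype.card ι + s) := by
          rw [Nat.add_sub_cancel' hx]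
          exact Nat.mul_le_mul_left _ (Nat.pow_le_pow_right h.one_le (by lia))
  calc _ ≤ #forests * (A ^ Fintype.card ι * t ^ (Fintype.card ι + s)) :=
        (card_le_card hcover).trans (card_biUnion_le_card_mul _ _ _ hforest)
    _ ≤ (2 * Fintype.card ι) ^ Fintype.card ι *
          (A ^ Fintype.card ι * t ^ (Fintype.card ι + s)) := by
        gcongr
        exact (card_le_univ _).trans_eq (by simp [mul_pow])
    _ = _ := by ring

lemma AttackBound.abs_attackCumulant_le [Std.Symm r] (h : AttackBound r E A t) (k : ℕ) :
    |attackCumulant r E k| ≤ (4 * k * A) ^ k * t ^ (k + k / 2) := by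
  classical
  have hcount := h.card_filter_card_component_le (ι := Fin k) (k / 2)
  have hterm (z : Fin k → X) : |indepSum (attackGraph r z) univ| ≤
      2 ^ k * if Nat.card (attackGraph r z).ConnectedComponent ≤ k / 2 then 1 else 0 := by
    split_ifs with hz
    · simpa using abs_indepSum_le (attackGraph r z) univ
    · have : ¬ ∀ v, ∃ u, (attackGraph r z).Adj v u := fun hv => by
        have := two_mul_card_component_le hv
        rw [Fintype.card_fin] at this
        lia
      push Not at this
      obtain ⟨v, hv⟩ := this
      simp [indepSum_eq_zero_of_isolated (mem_univ v) fun u _ => hv u]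
  have hcard := attackCumulant_card (r := r) (ι := Fin k) E
  rw [Fintype.card_fin] at hcard hcount
  calc |attackCumulant r E k|
      = |∑ z ∈ Fintype.piFinset fun _ : Fin k => E, indepSum (attackGraph r z) univ| := by
        rw [hcard, abs_mul, abs_neg_one_pow, one_mul]
    _ ≤ 2 ^ k * #{z ∈ Fintype.piFinset fun _ : Fin k => E |
          Nat.card (attackGraph r z).ConnectedComponent ≤ k / 2} := by
        rw [← Finset.sum_boole, mul_sum]
        exact (abs_sum_le_sum_abs _ _).trans (sum_le_sum fun z _ => hterm z)
    _ ≤ 2 ^ k * ((2 * k * A) ^ k * t ^ (k + k / 2)) := by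
        gcongr
        exact_mod_cast hcount
    _ = (4 * k * A) ^ k * t ^ (k + k / 2) := by
        rw [← mul_assoc, ← mul_pow]
        ring

open Classical in
lemma card_pairs_pow_le [Std.Symm r] (i : ℕ) :
    #{x ∈ E ×ˢ E | r x.1 x.2} ^ i ≤
      #{z ∈ Fintype.piFinset fun _ : Fin i × Bool => E | ∀ v, ∃ u, (attackGraph r z).Adj v u} := by
  have hpow : #(Fintype.piFinset fun _ : Fin i => {x ∈ E ×ˢ E | r x.1 x.2}) =
      #{x ∈ E ×ˢ E | r x.1 x.2} ^ i := by
    simp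
  rw [← hpow]
  refine card_le_card_of_injOn (fun f v => if v.2 then (f v.1).2 else (f v.1).1) ?_ ?_
  · intro f hf
    have hf (j : Fin i) := mem_filter.1 (Fintype.mem_piFinset.1 hf j)
    refine mem_coe.2 (mem_filter.2 ⟨Fintype.mem_piFinset.2 fun v => ?_, ?_⟩)
    · have := mem_product.1 (hf v.1).1
      obtain ⟨j, _ | _⟩ := v
      exacts [this.1, this.2]
    · rintro ⟨j, b⟩
      refine ⟨(j, !b), attackGraph_adj.2 ⟨by simp, ?_⟩⟩
      cases b
      · exact (hf j).2
      · exact symm_of r (hf j).2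
  · intro f _ g _ h
    exact funext fun j => Prod.ext (congrFun h (j, false)) (congrFun h (j, true))

open Classical in
/-- Up to lower order in `t`, only the configurations whose attack graph is a perfect matching
contribute, each with weight `(-1) ^ i`. -/
lemma AttackBound.card_pairs_pow_mul_sub_le [Std.Symm r] (h : AttackBound r E A t) (i : ℕ) :
    (#{x ∈ E ×ˢ E | r x.1 x.2} : ℤ) ^ i * t -
        (2 ^ (2 * i) + 1) * (2 * (2 * i) * A) ^ (2 * i) * t ^ (3 * i) ≤
      (-1) ^ i * attackCumulant r E (2 * i) * t := by
  have hι : Fintype.card (Fin i × Bool) = 2 * i := by simp [mul_comm]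
  let configs : Finset (Fin i × Bool → X) := Fintype.piFinset fun _ => E
  let few : Finset (Fin i × Bool → X) :=
    {z ∈ configs | Nat.card (attackGraph r z).ConnectedComponent < i}
  have hpairs : (#{x ∈ E ×ˢ E | r x.1 x.2} : ℤ) ^ i ≤
      #{z ∈ configs | ∀ v, ∃ u, (attackGraph r z).Adj v u} :=
    mod_cast card_pairs_pow_le i
  have hfew : (#few : ℤ) * t ≤ (2 * (2 * i) * A) ^ (2 * i) * t ^ (3 * i) := by
    obtain rfl | hi := Nat.eq_zero_or_pos i
    · simp [few]
    have := h.card_filter_card_component_le (ι := Fin i × Bool) (i - 1)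
    simp only [hι, Nat.le_sub_one_iff_lt hi] at this
    calc (#few : ℤ) * t ≤ (2 * (2 * i) * A) ^ (2 * i) * t ^ (2 * i + (i - 1)) * t := by
          gcongr
          exact_mod_cast this
      _ = (2 * (2 * i) * A) ^ (2 * i) * t ^ (3 * i) := by
          rw [mul_assoc, ← pow_succ, show 2 * i + (i - 1) + 1 = 3 * i by lia]
  have hsum : (#{z ∈ configs | ∀ v, ∃ u, (attackGraph r z).Adj v u} : ℤ) -
      (2 ^ (2 * i) + 1) * #few ≤ (-1) ^ i * attackCumulant r E (2 * i) := by
    rw [← hι, attackCumulant_card, hι, (even_two_mul i).neg_one_pow, one_mul, ← Finset.sum_boole,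
      ← Finset.sum_boole, mul_sum, mul_sum, ← sum_sub_distrib]
    exact sum_le_sum fun z _ => sub_le_neg_one_pow_mul_indepSum hι
  calc _ ≤ (#{z ∈ configs | ∀ v, ∃ u, (attackGraph r z).Adj v u} : ℤ) * t -
        (2 ^ (2 * i) + 1) * (#few * t) := by
        rw [mul_assoc]
        gcongr
    _ ≤ _ := by
        rw [← mul_assoc, ← sub_mul]
        gcongr

end Counting

/-! ### Lattice points of dilated boards -/

section LatticeBoard

/-- The finite sets `E n` consist of the lattice points of the dilates `(n + 1) • U`. -/
def IsLatticeBoard (U : Set (ℝ × ℝ)) (E : ℕ → Finset (ℤ × ℤ)) : Prop :=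
  ∀ n z, z ∈ E n ↔ toReal z ∈ ((n : ℝ) + 1) • U

/-- Two points attack each other if their difference is parallel to a move in `M`. -/
def Attacks (M : Finset (ℤ × ℤ)) (z w : ℤ × ℤ) : Prop := ∃ m ∈ M, det (w - z) m = 0

instance (M : Finset (ℤ × ℤ)) : Std.Symm (Attacks M) where
  symm z w := by
    rintro ⟨m, hm, h⟩
    refine ⟨m, hm, ?_⟩
    simp only [det, Prod.fst_sub, Prod.snd_sub] at h ⊢
    linarith

variable {U : Set (ℝ × ℝ)} {E : ℕ → Finset (ℤ × ℤ)} {M : Finset (ℤ × ℤ)}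

lemma exists_mem_square_of_mem_smul (hU : Bornology.IsBounded U) :
    ∃ K : ℕ, ∀ (n : ℕ) (z : ℤ × ℤ), toReal z ∈ ((n : ℝ) + 1) • U →
      z ∈ Ico (-(K : ℤ) * (n + 1)) (K * (n + 1)) ×ˢ Ico (-(K : ℤ) * (n + 1)) (K * (n + 1)) := by
  obtain ⟨R, hR⟩ := hU.exists_norm_le
  obtain ⟨K, hK⟩ := exists_nat_gt R
  refine ⟨K, fun n z => ?_⟩
  rintro ⟨u, hu, hz⟩
  have hlt : ‖toReal z‖ < K * (n + 1) := by
    rw [← hz, norm_smul, Real.norm_of_nonneg (by positivity), mul_comm]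
    exact mul_lt_mul_of_pos_right ((hR u hu).trans_lt hK) (by positivity)
  have h₁ : |(z.1 : ℝ)| < K * (n + 1) := (norm_fst_le (toReal z)).trans_lt hlt
  have h₂ : |(z.2 : ℝ)| < K * (n + 1) := (norm_snd_le (toReal z)).trans_lt hlt
  norm_cast at h₁ h₂
  rw [abs_lt] at h₁ h₂
  simp only [mem_product, mem_Ico, neg_mul]
  exact ⟨⟨h₁.1.le, h₁.2⟩, h₂.1.le, h₂.2⟩

lemma exists_isLatticeBoard (hU : Bornology.IsBounded U) : ∃ E, IsLatticeBoard U E := by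
  classical
  obtain ⟨K, hK⟩ := exists_mem_square_of_mem_smul hU
  refine ⟨fun n => {z ∈ Ico (-(K : ℤ) * (n + 1)) (K * (n + 1)) ×ˢ
    Ico (-(K : ℤ) * (n + 1)) (K * (n + 1)) | toReal z ∈ ((n : ℝ) + 1) • U}, fun n z => ?_⟩
  rw [mem_filter, and_iff_right_of_imp (hK n z)]

lemma card_filter_det_eq_le {R : Type*} [CommRing R] [IsDomain R] [DecidableEq R] {m : R × R}
    (hm : m ≠ 0) (c : R) (s : Finset R) : #{z ∈ s ×ˢ s | det z m = c} ≤ #s := by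
  by_cases h₂ : m.2 = 0
  · have h₁ : m.1 ≠ 0 := fun h₁ => hm (Prod.ext h₁ h₂)
    refine card_le_card_of_injOn Prod.fst
      (fun z hz => (mem_product.1 (mem_filter.1 hz).1).1) fun z hz w hw hzw => ?_
    have hdet : det z m = det w m := (mem_filter.1 hz).2.trans (mem_filter.1 hw).2.symm
    simp only [det, hzw, sub_right_inj, mul_left_inj' h₁] at hdet
    exact Prod.ext hzw hdet
  · refine card_le_card_of_injOn Prod.snd
      (fun z hz => (mem_product.1 (mem_filter.1 hz).1).2) fun z hz w hw hzw => ?_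
    have hdet : det z m = det w m := (mem_filter.1 hz).2.trans (mem_filter.1 hw).2.symm
    simp only [det, hzw, sub_left_inj, mul_left_inj' h₂] at hdet
    exact Prod.ext hdet hzw

open Classical in
lemma IsLatticeBoard.exists_attackBound (hE : IsLatticeBoard U E) (hU : Bornology.IsBounded U)
    (hM : ∀ m ∈ M, m ≠ 0) : ∃ A, ∀ n, AttackBound (Attacks M) (E n) A (n + 1) := by
  obtain ⟨K, hK⟩ := exists_mem_square_of_mem_smul hU
  have hcard (n : ℕ) : #(Ico (-(K : ℤ) * (n + 1)) (K * (n + 1))) = 2 * K * (n + 1) := by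
    rw [Int.card_Ico]
    lia
  have hsub (n : ℕ) : E n ⊆
      Ico (-(K : ℤ) * (n + 1)) (K * (n + 1)) ×ˢ Ico (-(K : ℤ) * (n + 1)) (K * (n + 1)) :=
    fun z hz => hK n z ((hE n z).1 hz)
  refine ⟨(2 * K) ^ 2 + #M * (2 * K), fun n => ⟨n.succ_pos, ?_, fun w _ => ?_⟩⟩
  · calc #(E n) ≤ (2 * K * (n + 1)) * (2 * K * (n + 1)) := by
          simpa only [card_product, hcard] using card_le_card (hsub n)
      _ = (2 * K) ^ 2 * (n + 1) ^ 2 := by ring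
      _ ≤ ((2 * K) ^ 2 + #M * (2 * K)) * (n + 1) ^ 2 := by gcongr; exact Nat.le_add_right _ _
  · have hcover : {z ∈ E n | Attacks M w z} ⊆ M.biUnion fun m =>
        {z ∈ Ico (-(K : ℤ) * (n + 1)) (K * (n + 1)) ×ˢ Ico (-(K : ℤ) * (n + 1)) (K * (n + 1)) |
          det z m = det w m} := by
      intro z hz
      obtain ⟨hzE, m, hm, h⟩ := mem_filter.1 hz
      refine mem_biUnion.2 ⟨m, hm, mem_filter.2 ⟨hsub n hzE, ?_⟩⟩
      simp only [det, Prod.fst_sub, Prod.snd_sub] at h ⊢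
      linarith
    calc #{z ∈ E n | Attacks M w z} ≤ #M * (2 * K * (n + 1)) :=
          (card_le_card hcover).trans <| card_biUnion_le_card_mul _ _ _ fun m hm =>
            (card_filter_det_eq_le (hM m hm) _ _).trans_eq (hcard n)
      _ = #M * (2 * K) * (n + 1) := by ring
      _ ≤ ((2 * K) ^ 2 + #M * (2 * K)) * (n + 1) := by gcongr; exact Nat.le_add_left _ _

lemma sq_card_le_card_mul_card_filter_eq {α β : Type*} [DecidableEq β] {s : Finset α}
    {t : Finset β} {f : α → β} (hf : Set.MapsTo f s t) :
    #s ^ 2 ≤ #t * #{x ∈ s ×ˢ s | f x.1 = f x.2} := by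
  have hpairs : #{x ∈ s ×ˢ s | f x.1 = f x.2} = ∑ b ∈ t, #{a ∈ s | f a = b} ^ 2 := by
    rw [card_eq_sum_card_fiberwise (f := fun x => f x.1) (t := t)]
    · refine sum_congr rfl fun b _ => ?_
      rw [sq, ← card_product, filter_filter]
      congr 1
      ext x
      simp only [mem_filter, mem_product]
      grind
    · intro x hx
      exact hf (mem_product.1 (mem_filter.1 hx).1).1
  rw [hpairs, card_eq_sum_card_fiberwise hf]
  exact sq_sum_le_card_mul_sum_sq

open Classical in
lemma IsLatticeBoard.exists_sq_card_le (hE : IsLatticeBoard U E) (hU : Bornology.IsBounded U)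
    (hM : M.Nonempty) :
    ∃ C > 0, ∀ n, #(E n) ^ 2 ≤ C * (n + 1) * #{x ∈ E n ×ˢ E n | Attacks M x.1 x.2} := by
  obtain ⟨m, hm⟩ := hM
  obtain ⟨K, hK⟩ := exists_mem_square_of_mem_smul hU
  set L := K * (m.1.natAbs + m.2.natAbs)
  refine ⟨2 * L + 1, by lia, fun n => ?_⟩
  have hmaps : Set.MapsTo (det · m) (E n) (Icc (-(L * (n + 1) : ℤ)) (L * (n + 1))) := by
    intro z hz
    have hz' := hK n z ((hE n z).1 hz)
    simp only [mem_product, mem_Ico, neg_mul] at hz'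
    rw [coe_Icc, Set.mem_Icc, ← abs_le]
    have h₁ : |z.1| ≤ K * (n + 1) := abs_le.2 ⟨hz'.1.1, hz'.1.2.le⟩
    have h₂ : |z.2| ≤ K * (n + 1) := abs_le.2 ⟨hz'.2.1, hz'.2.2.le⟩
    calc |det z m| ≤ |z.1| * |m.2| + |z.2| * |m.1| := by
          simpa only [det, abs_mul] using abs_sub (z.1 * m.2) (z.2 * m.1)
      _ ≤ K * (n + 1) * |m.2| + K * (n + 1) * |m.1| := by gcongr
      _ = L * (n + 1) := by simp only [L]; push_cast; ring
  calc #(E n) ^ 2 ≤ (2 * (L * (n + 1)) + 1) * #{x ∈ E n ×ˢ E n | det x.1 m = det x.2 m} := by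
        convert sq_card_le_card_mul_card_filter_eq hmaps using 2
        rw [Int.card_Icc]
        lia
    _ ≤ (2 * L + 1) * (n + 1) * #{x ∈ E n ×ˢ E n | Attacks M x.1 x.2} := by
        refine Nat.mul_le_mul (by lia) (card_le_card (monotone_filter_right _ fun x _ hx => ?_))
        refine ⟨m, hm, ?_⟩
        simp only [det, Prod.fst_sub, Prod.snd_sub] at hx ⊢
        linarith

lemma isDefinable_attacks (M : Finset (ℤ × ℤ)) :
    IsDefinable fun x : (ℤ × ℤ) × (ℤ × ℤ) => Attacks M x.1 x.2 := by
  refine .exists_mem M fun m _ => ?_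
  convert! IsDefinable.of_eq ((detHom m).comp (.snd (ℤ × ℤ) _ - .fst _ _)) 0 using 2 with x
  simp only [det, detHom, AddMonoidHom.comp_apply, AddMonoidHom.sub_apply, AddMonoidHom.coe_snd,
    AddMonoidHom.coe_fst, AddMonoidHom.coe_mk, ZeroHom.coe_mk, AddMonoidHom.zero_apply]
  grind

lemma IsLatticeBoard.card_nonattacking_mem_quasipolynomial {V : Finset (ℝ × ℝ)}
    (hV : ∀ v ∈ V, ∃ a b : ℚ, v = (↑a, ↑b))
    (hint : (interior (convexHull ℝ (V : Set (ℝ × ℝ)))).Nonempty)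
    (hE : IsLatticeBoard (interior (convexHull ℝ (V : Set (ℝ × ℝ)))) E) (q : ℕ) :
    (fun n => (#(nonattacking (Attacks M) (E n) (Fin q)) : ℚ)) ∈ quasipolynomial ℕ := by
  obtain ⟨S, hS, hSmem⟩ := exists_isDefinable_mem_smul_interior hV hint
  obtain ⟨K, hK⟩ := exists_mem_square_of_mem_smul <|
    (isBounded_convexHull.2 V.finite_toSet.isBounded).subset interior_subset
  let point (i : Fin q) : ℤ × (Fin q → ℤ × ℤ) →+ ℤ × ℤ :=
    (Pi.evalAddMonoidHom (fun _ => ℤ × ℤ) i).comp (.snd ..)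
  have hdef : IsDefinable fun y : ℤ × (Fin q → ℤ × ℤ) => (∀ i, S (y.1, y.2 i)) ∧
      ∀ i j, i = j ∨ ¬ Attacks M (y.2 i) (y.2 j) :=
    .and (.forall_finite fun i => hS.comp ((AddMonoidHom.fst ..).prod (point i))) <|
      .forall_finite fun i => .forall_finite fun j => .or (.const _) <|
        ((isDefinable_attacks M).comp ((point i).prod (point j))).not
  convert! hdef.card_filter_mem_quasipolynomial K using 4 with n
  have hmem (z : ℤ × ℤ) : S (n + 1, z) ↔ z ∈ E n := by
    rw [hSmem _ (by lia), hE]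
    push_cast
    rfl
  ext z
  simp only [mem_nonattacking, mem_filter, tuplesInSquare, Fintype.mem_piFinset, hmem,
    ← or_iff_not_imp_left, Pairwise, ne_eq]
  exact (and_iff_right_of_imp fun h i => hK n _ ((hE n _).1 (h.1 i))).symm

end LatticeBoard

/-! ### Area -/

section Area

variable {U : Set (ℝ × ℝ)} {E : ℕ → Finset (ℤ × ℤ)}

lemma mem_span_basisFun_iff (v : Fin 2 → ℝ) :
    v ∈ Submodule.span ℤ (Set.range (Pi.basisFun ℝ (Fin 2))) ↔
      ∃ z : ℤ × ℤ, (ContinuousLinearEquiv.finTwoArrow ℝ ℝ).symm (toReal z) = v := by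
  rw [Submodule.mem_span_range_iff_exists_fun, (finTwoArrowEquiv ℤ).symm.exists_congr_left]
  refine exists_congr fun z => ?_
  refine Eq.congr_left (funext fun j => ?_)
  fin_cases j <;> simp [toReal, Pi.single_apply]

lemma toReal_injective : Function.Injective toReal := fun z w h => by
  simpa [toReal, Prod.ext_iff] using h

lemma IsLatticeBoard.card_inter_smul_span (hE : IsLatticeBoard U E) (n : ℕ) :
    Nat.card ↥(ContinuousLinearEquiv.finTwoArrow ℝ ℝ ⁻¹' U ∩ ((n : ℝ) + 1)⁻¹ •
      (Submodule.span ℤ (Set.range (Pi.basisFun ℝ (Fin 2))) : Set (Fin 2 → ℝ))) = #(E n) := by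
  let e := ContinuousLinearEquiv.finTwoArrow ℝ ℝ
  have ht : (n : ℝ) + 1 ≠ 0 := by positivity
  have hinj : Function.Injective fun z => ((n : ℝ) + 1)⁻¹ • e.symm (toReal z) :=
    (smul_right_injective _ (inv_ne_zero ht)).comp (e.symm.injective.comp toReal_injective)
  have he (z : ℤ × ℤ) : e (((n : ℝ) + 1)⁻¹ • e.symm (toReal z)) = ((n : ℝ) + 1)⁻¹ • toReal z := by
    rw [map_smul, e.apply_symm_apply]
  rw [← Set.ncard_coe_finset, ← Set.ncard_image_of_injective _ hinj, Nat.card_coe_set_eq]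
  congr 1
  ext v
  simp only [Set.mem_inter_iff, Set.mem_preimage, Set.mem_smul_set, SetLike.mem_coe,
    mem_span_basisFun_iff, Set.mem_image, hE n, Set.mem_smul_set_iff_inv_smul_mem₀ ht]
  constructor
  · rintro ⟨hv, _, ⟨z, rfl⟩, rfl⟩
    exact ⟨z, he z ▸ hv, rfl⟩
  · rintro ⟨z, hz, rfl⟩
    exact ⟨(he z).symm ▸ hz, _, ⟨z, rfl⟩, rfl⟩

open Filter Topology in
lemma IsLatticeBoard.tendsto_card_div_sq (hE : IsLatticeBoard U E) (hU : Bornology.IsBounded U)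
    (hmeas : MeasurableSet U) (hfr : volume (frontier U) = 0) :
    Tendsto (fun n : ℕ => (#(E n) : ℝ) / (n + 1) ^ 2) atTop (𝓝 (volume.real U)) := by
  let e := ContinuousLinearEquiv.finTwoArrow ℝ ℝ
  have hvol : MeasurePreserving e volume volume := volume_preserving_finTwoArrow ℝ
  have hbdd : Bornology.IsBounded (e ⁻¹' U) := by
    simpa only [ContinuousLinearEquiv.image_symm_eq_preimage] using
      e.symm.lipschitz.isBounded_image hU
  have hfr' : volume (frontier (e ⁻¹' U)) = 0 := by
    rw [show ⇑e = e.toHomeomorph from rfl, ← e.toHomeomorph.preimage_frontier]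
    exact (hvol.measure_preimage isClosed_frontier.nullMeasurableSet).trans hfr
  have h := tendsto_card_div_pow_atTop_volume _ hbdd (e.continuous.measurable hmeas) hfr'
  rw [measureReal_def, hvol.measure_preimage hmeas.nullMeasurableSet, ← measureReal_def] at h
  refine (h.comp (tendsto_add_atTop_nat 1)).congr fun n => ?_
  simp only [Function.comp, Fintype.card_fin, Nat.cast_add, Nat.cast_one]
  rw [← hE.card_inter_smul_span]

open Filter Topology in
lemma IsLatticeBoard.tendsto_card_div_sq_convex {B : Set (ℝ × ℝ)} (hB : Convex ℝ B)
    (hE : IsLatticeBoard (interior B) E) (hbdd : Bornology.IsBounded B) :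
    Tendsto (fun n : ℕ => (#(E n) : ℝ) / (n + 1) ^ 2) atTop (𝓝 (volume.real B)) := by
  have hvol : volume.real (interior B) = volume.real B :=
    congrArg ENNReal.toReal (measure_interior_of_null_frontier (hB.addHaar_frontier volume))
  exact hvol ▸ hE.tendsto_card_div_sq (hbdd.subset interior_subset) measurableSet_interior
    (hB.interior.addHaar_frontier volume)

lemma measureReal_pos_of_interior_nonempty {B : Set (ℝ × ℝ)} (hint : (interior B).Nonempty)
    (hbdd : Bornology.IsBounded B) : 0 < volume.real B :=
  ENNReal.toReal_pos (Measure.measure_pos_of_nonempty_interior volume hint).ne'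
    hbdd.measure_lt_top.ne

end Area

/-! ### Growth of quasipolynomials -/

section Growth

open Filter Topology Asymptotics

lemma tendsto_eval_div_eval_of_monic {P Q : ℝ[X]} (hQ : Q.Monic) (hPQ : P.degree ≤ Q.degree) :
    Tendsto (fun x => P.eval x / Q.eval x) atTop (𝓝 (P.coeff Q.natDegree)) := by
  rcases hPQ.lt_or_eq with h | h
  · rw [coeff_eq_zero_of_degree_lt (degree_eq_natDegree hQ.ne_zero ▸ h)]
    exact div_tendsto_atTop_zero_of_degree_lt P Q h
  · rw [← natDegree_eq_of_degree_eq h, coeff_natDegree, ← div_one P.leadingCoeff, ← hQ.leadingCoeff]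
    exact div_tendsto_atTop_leadingCoeff_div_of_degree_eq P Q h

lemma natDegree_X_add_C_pow (x : ℝ) (d : ℕ) : ((X + C x) ^ d).natDegree = d := by
  rw [natDegree_pow, natDegree_X_add_C, mul_one]

variable {a : ℕ → ℚ} {m : ℕ} {p : ℕ → ℚ[X]}

namespace HasConstituents

lemma eval_map_add_mul (h : HasConstituents a m p) (k j : ℕ) :
    ((p k).map (Rat.castHom ℝ)).eval ((k + m * j : ℕ) : ℝ) = a (k + m * j) := by
  rw [eval_natCast_map, h.eval_eq, mul_comm, show p (k + j * m) = p k from h.periodic.nat_mul j k]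
  rfl

lemma tendsto_add_mul (h : HasConstituents a m p) (k : ℕ) :
    Tendsto (fun j => k + m * j) atTop atTop :=
  tendsto_atTop_mono (fun j => le_add_left (Nat.le_mul_of_pos_left j h.pos)) tendsto_id

lemma natDegree_le_of_isBigO (h : HasConstituents a m p) {d : ℕ}
    (ha : (fun n => (a n : ℝ)) =O[atTop] fun n => ((n : ℝ) + 1) ^ d) (k : ℕ) :
    (p k).natDegree ≤ d := by
  by_contra! hlt
  have hdeg : ((X + C 1 : ℝ[X]) ^ d).degree < ((p k).map (Rat.castHom ℝ)).degree :=
    degree_lt_degree (by rwa [natDegree_X_add_C_pow, natDegree_map])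
  have hseq := tendsto_natCast_atTop_atTop (R := ℝ).comp (h.tendsto_add_mul k)
  have hlo := ((isLittleO_atTop_of_degree_lt _ _ hdeg).comp_tendsto hseq).trans_isBigO
    ((ha.comp_tendsto (h.tendsto_add_mul k)).congr_left fun j => (h.eval_map_add_mul k j).symm)
  refine isLittleO_irrefl (.of_forall fun j => ?_) (hlo.congr_left fun j => ?_)
  · simp only [Function.comp_apply]
    positivity
  · simp

lemma tendsto_div_pow (h : HasConstituents a m p) {d k : ℕ} (hd : (p k).natDegree ≤ d) :
    Tendsto (fun j => (a (k + m * j) : ℝ) / ((k + m * j : ℕ) + 1) ^ d) atTop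
      (𝓝 ((p k).coeff d)) := by
  have hmonic : ((X + C 1 : ℝ[X]) ^ d).Monic := (monic_X_add_C 1).pow d
  have hdeg : ((p k).map (Rat.castHom ℝ)).degree ≤ ((X + C 1 : ℝ[X]) ^ d).degree := by
    rw [degree_eq_natDegree hmonic.ne_zero, natDegree_X_add_C_pow, degree_map]
    exact natDegree_le_iff_degree_le.1 hd
  have hlim := (tendsto_eval_div_eval_of_monic hmonic hdeg).comp
    (tendsto_natCast_atTop_atTop (R := ℝ).comp (h.tendsto_add_mul k))
  convert! hlim using 2 with j
  · simp [← h.eval_map_add_mul]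
  · rw [natDegree_X_add_C_pow, coeff_map, Rat.coe_castHom]

lemma coeff_eq_of_tendsto (h : HasConstituents a m p) {d k : ℕ} (hd : (p k).natDegree ≤ d) {v : ℝ}
    (hv : Tendsto (fun n => (a n : ℝ) / (n + 1) ^ d) atTop (𝓝 v)) : ((p k).coeff d : ℝ) = v :=
  tendsto_nhds_unique (h.tendsto_div_pow hd) (hv.comp (h.tendsto_add_mul k))

lemma coeff_ne_zero_of_eventually_le (h : HasConstituents a m p) {d k : ℕ}
    (hd : (p k).natDegree ≤ d) {ε : ℝ} (hε : 0 < ε)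
    (ha : ∀ᶠ n : ℕ in atTop, ε ≤ |(a n : ℝ) / (n + 1) ^ d|) : (p k).coeff d ≠ 0 := by
  intro h0
  have hle := ge_of_tendsto (h.tendsto_div_pow hd).abs ((h.tendsto_add_mul k).eventually ha)
  rw [h0, Rat.cast_zero, abs_zero] at hle
  exact hε.not_ge hle

end HasConstituents

end Growth

/-! ### Top coefficients of binomial sums of polynomials -/

section TopCoeff

variable {K : Type*} [Field K]

lemma reflect_pow {R : Type*} [Semiring R] {f : R[X]} {d : ℕ} (hf : f.natDegree ≤ d) (m : ℕ) :
    reflect (m * d) (f ^ m) = reflect d f ^ m := by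
  induction m with
  | zero => simp
  | succ m ih =>
    rw [pow_succ, pow_succ, add_one_mul, reflect_mul _ _ (natDegree_pow_le_of_le m hf) hf, ih]

variable (K) in
/-- The polynomial whose value at `q` is the binomial coefficient `q.choose l`. -/
noncomputable def binomialPoly (l : ℕ) : K[X] := C (l.factorial : K)⁻¹ * descPochhammer K l

/-- For a polynomial `F` with constant term `1`, the polynomial in `m` that gives the coefficient of
`X ^ r` in `F ^ m`. -/
noncomputable def powCoeffPoly (F : K[X]) (r : ℕ) : K[X] :=
  ∑ l ∈ range (r + 1), C (((F - 1) ^ l).coeff r) * binomialPoly K l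

lemma powCoeffPoly_zero (F : K[X]) : powCoeffPoly F 0 = 1 := by
  simp [powCoeffPoly, binomialPoly]

/-- The contribution of the summand with index `κ` to `topCoeffPoly N c i`, with `X ^ x.1` taken
from the power of `reflect 2 N` and `X ^ x.2` from `reflect (2 * κ) (c κ)`. -/
noncomputable def topCoeffTerm (N : K[X]) (c : ℕ → K[X]) (κ : ℕ) (x : ℕ × ℕ) : K[X] :=
  C ((N.coeff 2)⁻¹ ^ κ * (reflect (2 * κ) (c κ)).coeff x.2) *
    (binomialPoly K κ * (powCoeffPoly (C (N.coeff 2)⁻¹ * reflect 2 N) x.1).comp (X - C (κ : K)))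

/-- The polynomial in `q` that gives, up to the factor `N.coeff 2 ^ q`, the coefficient of
`X ^ (2 * q - i)` in `∑ κ ≤ q, q.choose κ * N ^ (q - κ) * c κ` when `N` has degree `2` and `c κ` has
degree at most `κ + κ / 2`. -/
noncomputable def topCoeffPoly (N : K[X]) (c : ℕ → K[X]) (i : ℕ) : K[X] :=
  ∑ κ ∈ range (2 * i + 1), ∑ x ∈ antidiagonal i, topCoeffTerm N c κ x

variable {N : K[X]} {c : ℕ → K[X]} {i κ q : ℕ}

lemma topCoeffPoly_congr {c' : ℕ → K[X]} (h : ∀ κ ≤ 2 * i, c κ = c' κ) :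
    topCoeffPoly N c i = topCoeffPoly N c' i :=
  sum_congr rfl fun κ hκ => by simp only [topCoeffTerm, h κ (mem_range_succ_iff.1 hκ)]

lemma topCoeffTerm_eq_zero (hc : (c κ).natDegree ≤ κ + κ / 2) {x : ℕ × ℕ} (hx : 2 * x.2 < κ) :
    topCoeffTerm N c κ x = 0 := by
  have hzero : (reflect (2 * κ) (c κ)).coeff x.2 = 0 := by
    rw [coeff_reflect, revAt_le (by lia)]
    exact coeff_eq_zero_of_natDegree_lt (by lia)
  rw [topCoeffTerm, hzero, mul_zero, C_0, zero_mul]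

variable [CharZero K]

lemma natDegree_binomialPoly (l : ℕ) : (binomialPoly K l).natDegree = l := by
  rw [binomialPoly, natDegree_C_mul (by simp [l.factorial_ne_zero]), descPochhammer_natDegree]

lemma coeff_binomialPoly_ne_zero (l : ℕ) : (binomialPoly K l).coeff l ≠ 0 := by
  have h := (monic_descPochhammer K l).coeff_natDegree
  rw [descPochhammer_natDegree] at h
  simp [binomialPoly, h, l.factorial_ne_zero]

lemma eval_binomialPoly_natCast (l q : ℕ) : (binomialPoly K l).eval (q : K) = q.choose l := by
  rw [binomialPoly, eval_mul, eval_C, descPochhammer_eval_eq_descFactorial,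
    Nat.descFactorial_eq_factorial_mul_choose, Nat.cast_mul,
    inv_mul_cancel_left₀ (mod_cast l.factorial_ne_zero)]

lemma natDegree_powCoeffPoly_le (F : K[X]) (r : ℕ) : (powCoeffPoly F r).natDegree ≤ r :=
  natDegree_sum_le_of_forall_le _ _ fun l hl => (natDegree_C_mul_le _ _).trans <|
    (natDegree_binomialPoly l).trans_le (mem_range_succ_iff.1 hl)

lemma coeff_pow_eq_eval_powCoeffPoly {F : K[X]} (hF : F.coeff 0 = 1) (r m : ℕ) :
    (F ^ m).coeff r = (powCoeffPoly F r).eval (m : K) := by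
  have hlow {l : ℕ} (hl : r < l) : ((F - 1) ^ l).coeff r = 0 :=
    X_pow_dvd_iff.1 (pow_dvd_pow_of_dvd (X_dvd_iff.2 (by simp [hF])) l) r hl
  let term (l : ℕ) : K := ((F - 1) ^ l).coeff r * m.choose l
  calc (F ^ m).coeff r = ∑ l ∈ range (m + 1), term l := by
        nth_rw 1 [← sub_add_cancel F 1]
        simp only [add_pow, one_pow, mul_one, finsetSum_coeff, ← C_eq_natCast, coeff_mul_C, term]
    _ = ∑ l ∈ range (m + r + 1), term l := by
        refine sum_subset (range_subset_range.2 (by lia)) fun l _ hl => ?_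
        rw [mem_range, not_lt] at hl
        simp [term, Nat.choose_eq_zero_of_lt hl]
    _ = ∑ l ∈ range (r + 1), term l := by
        refine (sum_subset (range_subset_range.2 (by lia)) fun l _ hl => ?_).symm
        rw [mem_range, not_lt] at hl
        simp only [term, hlow hl, zero_mul]
    _ = (powCoeffPoly F r).eval (m : K) := by
        simp only [powCoeffPoly, eval_finsetSum, eval_mul, eval_C, eval_binomialPoly_natCast, term]

lemma natDegree_topCoeffTerm_le (N : K[X]) (c : ℕ → K[X]) (κ : ℕ) (x : ℕ × ℕ) :
    (topCoeffTerm N c κ x).natDegree ≤ κ + x.1 := by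
  refine (natDegree_C_mul_le _ _).trans (natDegree_mul_le_of_le (natDegree_binomialPoly κ).le ?_)
  rw [natDegree_comp, natDegree_X_sub_C, mul_one]
  exact natDegree_powCoeffPoly_le _ _

lemma natDegree_topCoeffPoly_le (hc : ∀ κ, (c κ).natDegree ≤ κ + κ / 2) :
    (topCoeffPoly N c i).natDegree ≤ 2 * i := by
  refine natDegree_sum_le_of_forall_le _ _ fun κ _ =>
    natDegree_sum_le_of_forall_le _ _ fun x hx => ?_
  rw [HasAntidiagonal.mem_antidiagonal] at hx
  rcases lt_or_ge (2 * x.2) κ with hlt | hle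
  · simp [topCoeffTerm_eq_zero (hc κ) hlt]
  · exact (natDegree_topCoeffTerm_le N c κ x).trans (by lia)

lemma coeff_topCoeffPoly (hc : ∀ κ, (c κ).natDegree ≤ κ + κ / 2) :
    (topCoeffPoly N c i).coeff (2 * i) =
      (N.coeff 2)⁻¹ ^ (2 * i) * (c (2 * i)).coeff (3 * i) *
        (binomialPoly K (2 * i)).coeff (2 * i) := by
  have hzero {κ : ℕ} {x : ℕ × ℕ} (hx : x.1 + x.2 = i) (hne : κ ≠ 2 * i ∨ x ≠ (0, i)) :
      (topCoeffTerm N c κ x).coeff (2 * i) = 0 := by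
    rcases lt_or_ge (2 * x.2) κ with hlt | hle
    · simp [topCoeffTerm_eq_zero (hc κ) hlt]
    · refine coeff_eq_zero_of_natDegree_lt ((natDegree_topCoeffTerm_le N c κ x).trans_lt ?_)
      rw [ne_eq, ne_eq, Prod.ext_iff] at hne
      lia
  simp only [topCoeffPoly, finsetSum_coeff]
  rw [sum_eq_single_of_mem (2 * i) (self_mem_range_succ _) fun κ _ hκ =>
      sum_eq_zero fun x hx => hzero (HasAntidiagonal.mem_antidiagonal.1 hx) (.inl hκ),
    sum_eq_single_of_mem (0, i) (by simp) fun x hx hne =>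
      hzero (HasAntidiagonal.mem_antidiagonal.1 hx) (.inr hne),
    topCoeffTerm, powCoeffPoly_zero, one_comp, mul_one, coeff_C_mul, coeff_reflect,
    revAt_le (by lia), show 2 * (2 * i) - i = 3 * i by lia]

lemma degree_topCoeffPoly (hN : N.coeff 2 ≠ 0) (hc : ∀ κ, (c κ).natDegree ≤ κ + κ / 2)
    (hci : (c (2 * i)).coeff (3 * i) ≠ 0) : (topCoeffPoly N c i).degree = (2 * i : ℕ) := by
  refine degree_eq_of_le_of_coeff_ne_zero
    (natDegree_le_iff_degree_le.1 (natDegree_topCoeffPoly_le hc)) ?_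
  rw [coeff_topCoeffPoly hc]
  exact mul_ne_zero (mul_ne_zero (pow_ne_zero _ (inv_ne_zero hN)) hci)
    (coeff_binomialPoly_ne_zero _)

lemma coeff_choose_mul_pow_mul (hN : N.natDegree ≤ 2) (hN₀ : N.coeff 2 ≠ 0)
    (hc : (c κ).natDegree ≤ κ + κ / 2) (hq : i ≤ 2 * q) :
    (C (q.choose κ : K) * (N ^ (q - κ) * c κ)).coeff (2 * q - i) =
      N.coeff 2 ^ q * ∑ x ∈ antidiagonal i, (topCoeffTerm N c κ x).eval (q : K) := by
  rcases lt_or_ge q κ with hlt | hle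
  · simp [topCoeffTerm, eval_binomialPoly_natCast, Nat.choose_eq_zero_of_lt hlt]
  set A := N.coeff 2
  set F := C A⁻¹ * reflect 2 N
  have hF : F.coeff 0 = 1 := by simp [F, coeff_reflect, revAt_le, A, hN₀]
  have hNF : reflect 2 N = C A * F := by
    rw [← mul_assoc, ← C_mul, mul_inv_cancel₀ hN₀, C_1, one_mul]
  have hreflect : (N ^ (q - κ) * c κ).coeff (2 * q - i) =
      ((C A * F) ^ (q - κ) * reflect (2 * κ) (c κ)).coeff i := by
    rw [← hNF, ← reflect_pow hN, ← reflect_mul _ _ (natDegree_pow_le_of_le _ hN) (by lia),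
      coeff_reflect, revAt_le (by lia)]
    congr 1
    lia
  rw [coeff_C_mul, hreflect, mul_pow, ← C_pow, mul_assoc, coeff_C_mul, coeff_mul, mul_sum, mul_sum,
    mul_sum]
  refine sum_congr rfl fun x _ => ?_
  have hterm : topCoeffTerm N c κ x = C (A⁻¹ ^ κ * (reflect (2 * κ) (c κ)).coeff x.2) *
    (binomialPoly K κ * (powCoeffPoly F x.1).comp (X - C (κ : K))) := rfl
  simp only [hterm, coeff_pow_eq_eval_powCoeffPoly hF, eval_mul, eval_C, eval_comp, eval_sub,
    eval_X, eval_binomialPoly_natCast, ← Nat.cast_sub hle]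
  rw [← pow_sub_mul_pow A hle, inv_pow]
  field_simp

lemma coeff_sum_choose_mul_pow_mul (hN : N.natDegree ≤ 2) (hN₀ : N.coeff 2 ≠ 0)
    (hc : ∀ κ, (c κ).natDegree ≤ κ + κ / 2) (hq : i ≤ 2 * q) :
    (∑ κ ∈ range (q + 1), C (q.choose κ : K) * (N ^ (q - κ) * c κ)).coeff (2 * q - i) =
      N.coeff 2 ^ q * (topCoeffPoly N c i).eval (q : K) := by
  let term (κ : ℕ) : K := ∑ x ∈ antidiagonal i, (topCoeffTerm N c κ x).eval (q : K)
  suffices ∑ κ ∈ range (q + 1), term κ = ∑ κ ∈ range (2 * i + 1), term κ by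
    simp only [finsetSum_coeff, coeff_choose_mul_pow_mul hN hN₀ (hc _) hq, topCoeffPoly,
      eval_finsetSum, ← mul_sum]
    rw [this]
  rw [sum_subset (s₂ := range (q + 2 * i + 1)) (range_subset_range.2 (by lia)),
    sum_subset (s₁ := range (2 * i + 1)) (s₂ := range (q + 2 * i + 1))
      (range_subset_range.2 (by lia))]
  · refine fun κ _ hκ => sum_eq_zero fun x hx => ?_
    rw [mem_range, not_lt] at hκ
    rw [HasAntidiagonal.mem_antidiagonal] at hx
    rw [topCoeffTerm_eq_zero (hc κ) (by lia), eval_zero]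
  · refine fun κ _ hκ => sum_eq_zero fun x _ => ?_
    rw [mem_range, not_lt] at hκ
    simp [topCoeffTerm, eval_binomialPoly_natCast, Nat.choose_eq_zero_of_lt hκ]

end TopCoeff

section QuasipolynomialTopCoeff

open Filter Topology Asymptotics

variable {N : ℕ → ℚ} {c : ℕ → ℕ → ℚ} {m : ℕ} {l : ℕ → ℕ} {r : ℕ → ℚ[X]} {s : ℕ → ℕ → ℚ[X]}

namespace HasConstituents

lemma sum_choose_mul_pow_mul {q : ℕ} (hN : HasConstituents N m r)
    (hc : ∀ κ ≤ q, HasConstituents (c κ) m (s κ)) :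
    HasConstituents (fun n => ∑ κ ∈ range (q + 1), (q.choose κ : ℚ) * (N n ^ (q - κ) * c κ n)) m
      fun k => ∑ κ ∈ range (q + 1), C (q.choose κ : ℚ) * (r k ^ (q - κ) * s κ k) where
  pos := hN.pos
  periodic k := sum_congr rfl fun κ hκ => by
    rw [hN.periodic k, (hc κ (mem_range_succ_iff.1 hκ)).periodic k]
  eval_eq n := by
    rw [eval_finsetSum]
    refine sum_congr rfl fun κ hκ => ?_
    rw [hN.eval_eq n, (hc κ (mem_range_succ_iff.1 hκ)).eval_eq n, eval_mul, eval_C, eval_mul,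
      eval_pow]

lemma exists_sum_choose_mul_pow_mul (hN : HasConstituents N m r)
    (hc : ∀ κ, HasConstituents (c κ) (l κ) (s κ)) {P : ℕ} (hP : 0 < P) (hmP : m ∣ P) (q : ℕ) :
    ∃ p, P ∣ p ∧ HasConstituents
      (fun n => ∑ κ ∈ range (q + 1), (q.choose κ : ℚ) * (N n ^ (q - κ) * c κ n)) p
      fun k => ∑ κ ∈ range (q + 1), C (q.choose κ : ℚ) * (r k ^ (q - κ) * s κ k) := by
  have hp : 0 < P * ∏ κ ∈ range (q + 1), l κ := Nat.mul_pos hP (prod_pos fun κ _ => (hc κ).pos)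
  refine ⟨_, dvd_mul_right P _, (hN.of_dvd hp (hmP.mul_right _)).sum_choose_mul_pow_mul
    fun κ hκ => (hc κ).of_dvd hp ?_⟩
  exact (dvd_prod_of_mem l (mem_range_succ_iff.2 hκ)).mul_left P

lemma exists_periodic_topCoeffPoly (hN : HasConstituents N m r)
    (hc : ∀ κ, HasConstituents (c κ) (l κ) (s κ)) (i : ℕ) :
    ∃ P > 0, m ∣ P ∧ Function.Periodic (fun k => topCoeffPoly (r k) (s · k) i) P := by
  have hP : 0 < m * ∏ κ ∈ range (2 * i + 1), l κ :=
    Nat.mul_pos hN.pos (prod_pos fun κ _ => (hc κ).pos)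
  refine ⟨_, hP, dvd_mul_right m _, fun k => ?_⟩
  have hr := (hN.of_dvd hP (dvd_mul_right m _)).periodic k
  rw [Nat.cast_id] at hr
  simp only [hr]
  refine topCoeffPoly_congr fun κ hκ => ((hc κ).of_dvd hP ?_).periodic k
  exact (dvd_prod_of_mem l (mem_range_succ_iff.2 hκ)).mul_left m

end HasConstituents

theorem exists_coeff_sum_choose_mul_eq (hN : N ∈ quasipolynomial ℕ) {v : ℝ} (hv₀ : v ≠ 0)
    (hv : Tendsto (fun n => (N n : ℝ) / (n + 1) ^ 2) atTop (𝓝 v))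
    (hc : ∀ κ, c κ ∈ quasipolynomial ℕ)
    (hcO : ∀ κ, (fun n => (c κ n : ℝ)) =O[atTop] fun n => ((n : ℝ) + 1) ^ (κ + κ / 2))
    {i : ℕ} {ε : ℝ} (hε : 0 < ε)
    (hci : ∀ᶠ n : ℕ in atTop, ε ≤ |(c (2 * i) n : ℝ) / (n + 1) ^ (3 * i)|) :
    ∃ P > 0, ∃ g : ℕ → ℝ[X], (∀ k, (g k).degree = (2 * i : ℕ)) ∧
      ∀ q, i ≤ 2 * q → ∃ p, P ∣ p ∧ ∃ f : ℕ → ℚ[X],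
        HasConstituents
          (fun n => ∑ κ ∈ range (q + 1), (q.choose κ : ℚ) * (N n ^ (q - κ) * c κ n)) p f ∧
        ∀ k, ((f k).coeff (2 * q - i) : ℝ) = v ^ q * (g (k % P)).eval (q : ℝ) := by
  obtain ⟨m, r, hr⟩ := hN
  choose l s hs using hc
  have hNO : (fun n => (N n : ℝ)) =O[atTop] fun n => ((n : ℝ) + 1) ^ 2 :=
    isBigO_of_div_tendsto_nhds (.of_forall fun n hn => absurd hn (by positivity)) v hv
  have hr₂ (k) : (r k).natDegree ≤ 2 := hr.natDegree_le_of_isBigO hNO k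
  have hrv (k) : ((r k).coeff 2 : ℝ) = v := hr.coeff_eq_of_tendsto (hr₂ k) hv
  have hr₀ (k) : (r k).coeff 2 ≠ 0 := fun h => hv₀ (by simp [← hrv k, h])
  have hsdeg (k κ) : (s κ k).natDegree ≤ κ + κ / 2 := (hs κ).natDegree_le_of_isBigO (hcO κ) k
  have hs₀ (k) : (s (2 * i) k).coeff (3 * i) ≠ 0 :=
    (hs (2 * i)).coeff_ne_zero_of_eventually_le ((hsdeg k _).trans (by lia)) hε hci
  obtain ⟨P, hP, hmP, hG⟩ := hr.exists_periodic_topCoeffPoly hs i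
  refine ⟨P, hP, fun k => (topCoeffPoly (r k) (s · k) i).map (Rat.castHom ℝ), fun k => ?_,
    fun q hq => ?_⟩
  · rw [degree_map, degree_topCoeffPoly (hr₀ k) (hsdeg k) (hs₀ k)]
  · obtain ⟨p, hPp, hp⟩ := hr.exists_sum_choose_mul_pow_mul hs hP hmP q
    refine ⟨p, hPp, _, hp, fun k => ?_⟩
    have hGk : topCoeffPoly (r (k % P)) (s · (k % P)) i = topCoeffPoly (r k) (s · k) i :=
      hG.map_mod_nat k
    simp only [coeff_sum_choose_mul_pow_mul (hr₂ k) (hr₀ k) (hsdeg k) hq, hGk, eval_natCast_map,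
      Rat.cast_mul, Rat.cast_pow, hrv, Rat.coe_castHom]

end QuasipolynomialTopCoeff

/-! ### The coefficient theorem -/

section CoefficientTheorem

open Filter Topology Asymptotics

variable {U : Set (ℝ × ℝ)} {E : ℕ → Finset (ℤ × ℤ)} {M : Finset (ℤ × ℤ)} {V : Finset (ℝ × ℝ)}

lemma sub_div_le_abs_div_pow {N C D p t c : ℝ} {i : ℕ} (hC : 0 < C) (ht : 0 < t)
    (hp : N ^ 2 ≤ C * t * p) (hc : p ^ i * t - D * t ^ (3 * i) ≤ (-1) ^ i * c * t) :
    ((N / t ^ 2) ^ 2 / C) ^ i - D / t ≤ |c / t ^ (3 * i)| := by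
  have hp' : (N / t ^ 2) ^ 2 / C ≤ p / t ^ 3 := by
    rw [div_pow, div_div, div_le_div_iff₀ (by positivity) (by positivity)]
    calc N ^ 2 * t ^ 3 ≤ C * t * p * t ^ 3 := by gcongr
      _ = p * ((t ^ 2) ^ 2 * C) := by ring
  calc ((N / t ^ 2) ^ 2 / C) ^ i - D / t ≤ (p / t ^ 3) ^ i - D / t := by gcongr
    _ = (p ^ i * t - D * t ^ (3 * i)) / t / t ^ (3 * i) := by
        rw [div_pow, ← pow_mul]
        field_simp
    _ ≤ (-1) ^ i * c / t ^ (3 * i) := by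
        gcongr
        exact (div_le_iff₀ ht).2 hc
    _ ≤ |c / t ^ (3 * i)| := by
        rw [mul_div_assoc]
        exact (le_abs_self _).trans_eq (by simp [abs_mul])

namespace IsLatticeBoard

lemma card_mem_quasipolynomial (hV : ∀ v ∈ V, ∃ a b : ℚ, v = (↑a, ↑b))
    (hint : (interior (convexHull ℝ (V : Set (ℝ × ℝ)))).Nonempty)
    (hE : IsLatticeBoard (interior (convexHull ℝ (V : Set (ℝ × ℝ)))) E) :
    (fun n => (#(E n) : ℚ)) ∈ quasipolynomial ℕ := by
  convert! hE.card_nonattacking_mem_quasipolynomial (M := ∅) hV hint 1 using 3 with n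
  refine card_equiv (Equiv.funUnique (Fin 1) _).symm fun z => ?_
  simp [mem_nonattacking, Attacks, Pairwise]

lemma attackCumulant_mem_quasipolynomial (hV : ∀ v ∈ V, ∃ a b : ℚ, v = (↑a, ↑b))
    (hint : (interior (convexHull ℝ (V : Set (ℝ × ℝ)))).Nonempty)
    (hE : IsLatticeBoard (interior (convexHull ℝ (V : Set (ℝ × ℝ)))) E) (κ : ℕ) :
    (fun n => (attackCumulant (Attacks M) (E n) κ : ℚ)) ∈ quasipolynomial ℕ := by
  convert! Subalgebra.sum_mem (quasipolynomial ℕ) fun j (_ : j ∈ range (κ + 1)) =>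
    mul_mem (natCast_mem _ (κ.choose j)) <| mul_mem
      (pow_mem (neg_mem (hE.card_mem_quasipolynomial hV hint)) (κ - j))
      (hE.card_nonattacking_mem_quasipolynomial (M := M) hV hint j) using 1
  ext n
  simp [attackCumulant, binomialTransform]

lemma isBigO_attackCumulant (hE : IsLatticeBoard U E) (hU : Bornology.IsBounded U)
    (hM : ∀ m ∈ M, m ≠ 0) (κ : ℕ) :
    (fun n => (attackCumulant (Attacks M) (E n) κ : ℝ)) =O[atTop]
      fun n => ((n : ℝ) + 1) ^ (κ + κ / 2) := by
  obtain ⟨A, hA⟩ := hE.exists_attackBound hU hM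
  refine .of_bound ((4 * κ * A) ^ κ) (.of_forall fun n => ?_)
  rw [Real.norm_eq_abs, Real.norm_of_nonneg (by positivity)]
  exact_mod_cast (hA n).abs_attackCumulant_le κ

lemma eventually_le_abs_attackCumulant_div (hE : IsLatticeBoard U E) (hU : Bornology.IsBounded U)
    (hM₀ : M.Nonempty) (hM : ∀ m ∈ M, m ≠ 0) {v : ℝ} (hv₀ : 0 < v)
    (hv : Tendsto (fun n : ℕ => (#(E n) : ℝ) / (n + 1) ^ 2) atTop (𝓝 v)) (i : ℕ) :
    ∃ ε > 0, ∀ᶠ n : ℕ in atTop,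
      ε ≤ |(attackCumulant (Attacks M) (E n) (2 * i) : ℝ) / (n + 1) ^ (3 * i)| := by
  classical
  obtain ⟨C, hC, hpairs⟩ := hE.exists_sq_card_le hU hM₀
  obtain ⟨A, hA⟩ := hE.exists_attackBound hU hM
  let D : ℝ := (2 ^ (2 * i) + 1) * (2 * (2 * i) * A) ^ (2 * i)
  have hlim : Tendsto (fun n : ℕ => (((#(E n) : ℝ) / (n + 1) ^ 2) ^ 2 / C) ^ i - D / (n + 1)) atTop
      (𝓝 ((v ^ 2 / C) ^ i)) := by
    have hD : Tendsto (fun n : ℕ => D / ((n : ℝ) + 1)) atTop (𝓝 0) := by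
      simpa [div_eq_mul_inv] using tendsto_one_div_add_atTop_nhds_zero_nat.const_mul D
    simpa using (((hv.pow 2).div_const (C : ℝ)).pow i).sub hD
  have hpos : 0 < (v ^ 2 / C) ^ i := by positivity
  refine ⟨_, half_pos hpos, (hlim.eventually_const_le (half_lt_self hpos)).mono fun n hn => ?_⟩
  refine hn.trans (sub_div_le_abs_div_pow (mod_cast hC) n.cast_add_one_pos
    (p := #{x ∈ E n ×ˢ E n | Attacks M x.1 x.2}) (mod_cast hpairs n) ?_)
  have hcumulant := (Int.cast_le (R := ℝ)).2 ((hA n).card_pairs_pow_mul_sub_le i)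
  push_cast at hcumulant
  exact hcumulant

theorem exists_coeff_card_nonattacking_eq (hV : ∀ v ∈ V, ∃ a b : ℚ, v = (↑a, ↑b))
    (hint : (interior (convexHull ℝ (V : Set (ℝ × ℝ)))).Nonempty)
    (hE : IsLatticeBoard (interior (convexHull ℝ (V : Set (ℝ × ℝ)))) E)
    (hM₀ : M.Nonempty) (hM : ∀ m ∈ M, m ≠ 0) (i : ℕ) :
    ∃ P > 0, ∃ g : ℕ → ℝ[X], (∀ k, (g k).degree = (2 * i : ℕ)) ∧
      ∀ q, i ≤ 2 * q → ∃ p, P ∣ p ∧ ∃ f : ℕ → ℚ[X],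
        HasConstituents (fun n => (#(nonattacking (Attacks M) (E n) (Fin q)) : ℚ)) p f ∧
        ∀ k, ((f k).coeff (2 * q - i) : ℝ) =
          volume.real (convexHull ℝ (V : Set (ℝ × ℝ))) ^ q * (g (k % P)).eval (q : ℝ) := by
  have hbdd : Bornology.IsBounded (convexHull ℝ (V : Set (ℝ × ℝ))) :=
    isBounded_convexHull.2 V.finite_toSet.isBounded
  have hbdd' := hbdd.subset interior_subset
  have hvol := measureReal_pos_of_interior_nonempty hint hbdd
  have hv := hE.tendsto_card_div_sq_convex (convex_convexHull ℝ _) hbdd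
  obtain ⟨ε, hε, hlow⟩ := hE.eventually_le_abs_attackCumulant_div hbdd' hM₀ hM hvol hv i
  have hcount (q n : ℕ) : (#(nonattacking (Attacks M) (E n) (Fin q)) : ℚ) =
      ∑ κ ∈ range (q + 1), (q.choose κ : ℚ) *
        (#(E n) ^ (q - κ) * attackCumulant (Attacks M) (E n) κ) :=
    mod_cast (sum_choose_mul_attackCumulant (r := Attacks M) (E n) q).symm
  simp only [hcount]
  exact exists_coeff_sum_choose_mul_eq (c := fun κ n => attackCumulant (Attacks M) (E n) κ)
    (hE.card_mem_quasipolynomial hV hint) hvol.ne' (by simpa using hv)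
    (hE.attackCumulant_mem_quasipolynomial hV hint)
    (by simpa using hE.isBigO_attackCumulant hbdd' hM) hε (by simpa using hlow)

lemma ncard_eq_card_nonattacking (hE : IsLatticeBoard U E) (hM : M.Nonempty) (q n : ℕ) :
    Set.ncard {z : Fin q → ℤ × ℤ | Function.Injective z ∧
      (∀ i : Fin q, ((((z i).1 : ℝ), ((z i).2 : ℝ)) : ℝ × ℝ) ∈ ((n : ℝ) + 1) • U) ∧
      (∀ i j : Fin q, i ≠ j → ∀ m ∈ M,
        ((z j).1 - (z i).1) * m.2 - ((z j).2 - (z i).2) * m.1 ≠ 0)} =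
      #(nonattacking (Attacks M) (E n) (Fin q)) := by
  rw [← Set.ncard_coe_finset]
  congr 1
  ext z
  have hattacks (i j) : ¬ Attacks M (z i) (z j) ↔
      ∀ m ∈ M, ((z j).1 - (z i).1) * m.2 - ((z j).2 - (z i).2) * m.1 ≠ 0 := by
    simp [Attacks, det]
  simp only [Set.mem_ofPred_eq, mem_coe, mem_nonattacking, hE n, toReal, hattacks, Pairwise]
  refine and_iff_right_of_imp fun h i j hij => ?_
  by_contra hne
  obtain ⟨m, hm⟩ := hM
  exact h.2 i j hne m hm (by simp [hij])

end IsLatticeBoard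

end CoefficientTheorem

end Nonattacking

theorem stmt_1_general
    (M : Finset (ℤ × ℤ)) (hMne : M.Nonempty) (hM : ∀ m ∈ M, m ≠ 0)
    (V : Finset (ℝ × ℝ)) (hV : ∀ v ∈ V, ∃ a b : ℚ, v = ((a : ℝ), (b : ℝ)))
    (B : Set (ℝ × ℝ)) (hB : B = convexHull ℝ (V : Set (ℝ × ℝ)))
    (hBint : (interior B).Nonempty)
    (o : ℕ → ℕ → ℕ)
    (ho : ∀ q n : ℕ, o q n = Set.ncard {z : Fin q → ℤ × ℤ |
      Function.Injective z ∧
      (∀ i : Fin q, ((((z i).1 : ℝ), ((z i).2 : ℝ)) : ℝ × ℝ) ∈ ((n : ℝ) + 1) • interior B) ∧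
      (∀ i j : Fin q, i ≠ j → ∀ m ∈ M,
        ((z j).1 - (z i).1) * m.2 - ((z j).2 - (z i).2) * m.1 ≠ 0)}) :
    ∀ i : ℕ, ∃ P : ℕ, 0 < P ∧ ∃ g : ℕ → Polynomial ℝ,
      (∀ k < P, (g k).degree = ((2 * i : ℕ) : WithBot ℕ)) ∧
      ∀ q : ℕ, i ≤ 2 * q →
        ∃ p : ℕ, 0 < p ∧ P ∣ p ∧ ∃ f : ℕ → Polynomial ℚ,
          (∀ n : ℕ, (o q n : ℚ) = (f (n % p)).eval (n : ℚ)) ∧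
          ∀ k < p, ((f k).coeff (2 * q - i) : ℝ) =
            (volume B).toReal ^ q * (g (k % P)).eval (q : ℝ) := by
  intro i
  subst hB
  have hbdd := (isBounded_convexHull.2 V.finite_toSet.isBounded).subset interior_subset
  obtain ⟨E, hE⟩ := Nonattacking.exists_isLatticeBoard hbdd
  obtain ⟨P, hP, g, hg, hcoeff⟩ := hE.exists_coeff_card_nonattacking_eq hV hBint hMne hM i
  refine ⟨P, hP, g, fun k _ => hg k, fun q hq => ?_⟩
  obtain ⟨p, hPp, f, hf, hfg⟩ := hcoeff q hq
  refine ⟨p, hf.pos, hPp, f, fun n => ?_, fun k _ => hfg k⟩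
  rw [ho, hE.ncard_eq_card_nonattacking hMne, hf.eval_eq]
  exact congrArg (Polynomial.eval (n : ℚ)) (hf.periodic.map_mod_nat n).symm

/-- Coefficient Theorem: for every `i` there is a period `P_i` and real
polynomials `g_k` of degree exactly `2i` such that for every `q` with `2q ≥ i`, the
coefficient of `n^(2q-i)` in each constituent of the quasipolynomial `o_P(q;n)` equals
`(vol B)^q · g_{k mod P_i}(q)`. -/
theorem stmt_1
    (M : Finset (ℤ × ℤ)) (hMne : M.Nonempty)
    (hMmove : ∀ m ∈ M, m ≠ 0 ∧ Int.gcd m.1 m.2 = 1)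
    (hMpar : ∀ m ∈ M, ∀ m' ∈ M, m ≠ m' → m.1 * m'.2 - m.2 * m'.1 ≠ 0)
    (V : Finset (ℝ × ℝ)) (hV : ∀ v ∈ V, ∃ a b : ℚ, v = ((a : ℝ), (b : ℝ)))
    (B : Set (ℝ × ℝ)) (hB : B = convexHull ℝ (V : Set (ℝ × ℝ)))
    (hBint : (interior B).Nonempty)
    (o : ℕ → ℕ → ℕ)
    (ho : ∀ q n : ℕ, o q n = Set.ncard {z : Fin q → ℤ × ℤ |
      Function.Injective z ∧
      (∀ i : Fin q, ((((z i).1 : ℝ), ((z i).2 : ℝ)) : ℝ × ℝ) ∈ ((n : ℝ) + 1) • interior B) ∧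
      (∀ i j : Fin q, i ≠ j → ∀ m ∈ M,
        ((z j).1 - (z i).1) * m.2 - ((z j).2 - (z i).2) * m.1 ≠ 0)}) :
    ∀ i : ℕ, ∃ P : ℕ, 0 < P ∧ ∃ g : ℕ → Polynomial ℝ,
      (∀ k < P, (g k).degree = ((2 * i : ℕ) : WithBot ℕ)) ∧
      ∀ q : ℕ, i ≤ 2 * q →
        ∃ p : ℕ, 0 < p ∧ P ∣ p ∧ ∃ f : ℕ → Polynomial ℚ,
          (∀ n : ℕ, (o q n : ℚ) = (f (n % p)).eval (n : ℚ)) ∧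
          ∀ k < p, ((f k).coeff (2 * q - i) : ℝ) =
            (volume B).toReal ^ q * (g (k % P)).eval (q : ℝ) :=
  stmt_1_general M hMne (fun m hm => (hMmove m hm).1) V hV B hB hBint o ho
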